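/- arXiv:2502.07568 — 2 statements merged into one kernel-verified Lean document; each statement's English description precedes it below -/
import Mathlib

section
/- Let A be an arbitrary Young function and u ∈ C²_c(ℝⁿ). Then for every s ∈ (0,1), 𝒥_s(u) ≤ 𝒥(u) + ((1−s)/s) · nω_n · ∫_{ℝⁿ} A(2|u(x)|) dx, where nω_n = H^{n−1}(S^{n−1}) is the surface measure of the unit sphere (ω_n being the Lebesgue measure of the unit ball in ℝⁿ). -/
open MeasureTheory Filter Topology
open scoped ENNReal RealInnerProductSpace

noncomputable section

/-- Euclidean space `ℝⁿ`. -/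
abbrev Rn (n : ℕ) : Type := EuclideanSpace ℝ (Fin n)

/-- `a` is a Young density and `A` is the Young function it generates:
`a` is nonnegative, nondecreasing, right continuous, `a 0 = 0`, `a t > 0` for `t > 0`,
`a t → ∞` as `t → ∞`, and `A t = ∫₀ᵗ a(τ) dτ` for `t ≥ 0`. -/
def IsYoungPair (A a : ℝ → ℝ) : Prop :=
  (∀ t, 0 ≤ a t) ∧
  MonotoneOn a (Set.Ici (0 : ℝ)) ∧
  (∀ t, 0 ≤ t → ContinuousWithinAt a (Set.Ici t) t) ∧
  a 0 = 0 ∧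
  (∀ t, 0 < t → 0 < a t) ∧
  Tendsto a atTop atTop ∧
  (∀ t, 0 ≤ t → A t = ∫ τ in (0:ℝ)..t, a τ)

/-- The complementary (conjugate) Young function `Ā(t) = sup {τ t − A τ : τ ≥ 0}`. -/
def conjugateYoung (A : ℝ → ℝ) (t : ℝ) : ℝ :=
  sSup {x | ∃ τ, 0 ≤ τ ∧ x = τ * t - A τ}

/-- The Orlicz modular `∫ A(|u|) dμ`, valued in `[0,∞]`. -/
def orliczModular {α : Type*} [MeasurableSpace α] (μ : Measure α) (A : ℝ → ℝ)
    (u : α → ℝ) : ℝ≥0∞ :=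
  ∫⁻ x, ENNReal.ofReal (A (|u x|)) ∂μ

/-- The Luxemburg norm `inf {k > 0 : ∫ A(|u|/k) dμ ≤ 1}`. -/
def luxNorm {α : Type*} [MeasurableSpace α] (μ : Measure α) (A : ℝ → ℝ)
    (u : α → ℝ) : ℝ :=
  sInf {k | 0 < k ∧ orliczModular μ A (fun x => u x / k) ≤ 1}

/-- Membership in the Orlicz space `L^A`: the modular is finite for some `k > 0`. -/
def MemLA {α : Type*} [MeasurableSpace α] (μ : Measure α) (A : ℝ → ℝ)
    (u : α → ℝ) : Prop :=
  ∃ k, 0 < k ∧ orliczModular μ A (fun x => u x / k) < ⊤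

/-- Membership in `E^A`: the modular is finite for every `k > 0`. -/
def MemEA {α : Type*} [MeasurableSpace α] (μ : Measure α) (A : ℝ → ℝ)
    (u : α → ℝ) : Prop :=
  ∀ k, 0 < k → orliczModular μ A (fun x => u x / k) < ⊤

/-- The measure `dν = |x−y|^{−n} dx dy` on `ℝⁿ × ℝⁿ`. -/
def nuMeasure (n : ℕ) : Measure (Rn n × Rn n) :=
  volume.withDensity fun p => ENNReal.ofReal (‖p.1 - p.2‖ ^ (-(n:ℝ)))

/-- The Hölder quotient `D^s u (x,y) = (u x − u y)/|x−y|^s`. -/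
def holderQuot {n : ℕ} (s : ℝ) (u : Rn n → ℝ) (p : Rn n × Rn n) : ℝ :=
  (u p.1 - u p.2) / ‖p.1 - p.2‖ ^ s

/-- The fractional energy `𝒥_s(u) = (1−s) ∬ A(|D^s u|) dν`, valued in `[0,∞]`. -/
def Js {n : ℕ} (A : ℝ → ℝ) (s : ℝ) (u : Rn n → ℝ) : ℝ≥0∞ :=
  ENNReal.ofReal (1 - s) * ∫⁻ p, ENNReal.ofReal (A (|holderQuot s u p|)) ∂(nuMeasure n)

/-- The real-valued fractional energy `𝒥_s(u)` (Bochner integral version). -/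
def JsReal {n : ℕ} (A : ℝ → ℝ) (s : ℝ) (u : Rn n → ℝ) : ℝ :=
  (1 - s) * ∫ p : Rn n × Rn n, A (|holderQuot s u p|) * ‖p.1 - p.2‖ ^ (-(n:ℝ))

/-- The limit Young function
`A₀(t) = ∫₀ᵗ (∫_{S^{n−1}} A(r |ω⋅e|) dH^{n−1}(ω)) dr/r`, for a fixed unit vector `e`. -/
def A0 {n : ℕ} (A : ℝ → ℝ) (e : Rn n) (t : ℝ) : ℝ :=
  ∫ r in (0:ℝ)..t,
    (∫ ω in Metric.sphere (0 : Rn n) 1, A (r * |⟪ω, e⟫|)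
      ∂(Measure.hausdorffMeasure ((n : ℝ) - 1))) / r

/-- `v` is the (distributional) weak gradient of `u`. -/
def HasWeakGradient {n : ℕ} (u : Rn n → ℝ) (v : Rn n → Rn n) : Prop :=
  LocallyIntegrable u volume ∧ LocallyIntegrable v volume ∧
  ∀ φ : Rn n → ℝ, ContDiff ℝ (⊤ : ℕ∞) φ → HasCompactSupport φ → ∀ i : Fin n,
    ∫ x, u x * fderiv ℝ φ x (EuclideanSpace.single i 1)
      = - ∫ x, ⟪v x, EuclideanSpace.single i 1⟫ * φ x

/-- The limit energy `𝒥(u) = ∫ A₀(|∇u|) dx`, equal to `⊤` when `u` has no weak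
gradient (the infimum over the empty set). -/
def Jlim {n : ℕ} (A : ℝ → ℝ) (e : Rn n) (u : Rn n → ℝ) : ℝ≥0∞ :=
  ⨅ (v : Rn n → Rn n) (_ : HasWeakGradient u v), ∫⁻ x, ENNReal.ofReal (A0 A e ‖v x‖)

/-- The limit energy `𝒥(u) = ∫ A₀(|∇u|) dx` for differentiable `u`. -/
def JlimSmooth {n : ℕ} (A : ℝ → ℝ) (e : Rn n) (u : Rn n → ℝ) : ℝ≥0∞ :=
  ∫⁻ x, ENNReal.ofReal (A0 A e ‖gradient u x‖)

/-- The real-valued limit energy `𝒥(u) = ∫ A₀(|∇u|) dx` for differentiable `u`. -/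
def JReal {n : ℕ} (A : ℝ → ℝ) (e : Rn n) (u : Rn n → ℝ) : ℝ :=
  ∫ x, A0 A e ‖gradient u x‖

/-- The `C²` norm `‖u‖_{C²} = Σ_{i ≤ 2} sup_x ‖D^i u(x)‖`. -/
def C2Norm {n : ℕ} (u : Rn n → ℝ) : ℝ :=
  ∑ i ∈ Finset.range 3, ⨆ x : Rn n, ‖iteratedFDeriv ℝ i u x‖

/-- A standard mollifier: smooth, nonnegative, supported in the closed unit ball,
with unit integral. -/
def IsMollifier {n : ℕ} (ρ : Rn n → ℝ) : Prop :=
  ContDiff ℝ (⊤ : ℕ∞) ρ ∧ (∀ x, 0 ≤ ρ x) ∧ tsupport ρ ⊆ Metric.closedBall 0 1 ∧ (∫ x, ρ x) = 1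

/-- The rescaled mollifier `ρ_ε(x) = ε^{−n} ρ(x/ε)`. -/
def mollScaled {n : ℕ} (ρ : Rn n → ℝ) (ε : ℝ) (x : Rn n) : ℝ :=
  (ε ^ n)⁻¹ * ρ (ε⁻¹ • x)

/-- Convolution `u * ρ (x) = ∫ u(y) ρ(x−y) dy`. -/
def convol {n : ℕ} (u ρ : Rn n → ℝ) (x : Rn n) : ℝ :=
  ∫ y, u y * ρ (x - y)

/-- `n ω_n`, where `ω_n` is the Lebesgue measure of the unit ball of `ℝⁿ`;
this equals the surface measure of the unit sphere. -/
def nOmega (n : ℕ) : ℝ :=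
  n * (volume (Metric.ball (0 : Rn n) 1)).toReal

/-- `F_s(x) = (1−s) ∫ A(|u x − u y|/|x−y|^s) |x−y|^{−n} dy`. -/
def Fs {n : ℕ} (A : ℝ → ℝ) (s : ℝ) (u : Rn n → ℝ) (x : Rn n) : ℝ :=
  (1 - s) * ∫ y, A (|u x - u y| / ‖x - y‖ ^ s) * ‖x - y‖ ^ (-(n:ℝ))

/-- The Matuszewska function of `A` at the origin: `M₀(t) = limsup_{δ→0⁺} A(tδ)/A(δ)`,
valued in `[0,∞]`. -/
def M0 (A : ℝ → ℝ) (t : ℝ) : ℝ≥0∞ :=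
  limsup (fun δ => ENNReal.ofReal (A (t * δ) / A δ)) (𝓝[>] (0:ℝ))

/-!
The measure `ν` disintegrates as `|h|⁻ⁿ dh dx` under `(x, y) = (x + h, x)`, and the energy is split
at `|h| = 1`.

For `|h| < 1`, Jensen's inequality along the segment `[x, x + h]` and translation invariance replace
the quotient by `⟪∇u(x), h⟫ / |h|ˢ`. For fixed `x`, with `v = ∇u(x)`, the substitution
`ρ = |v| |h|^(1 - s)` in polar coordinates turns the integral over `h`, times `1 - s`, into
`A₀(|v|)`.

For `|h| ≥ 1`, convexity gives
`A(|u(x + h) - u(x)| / |h|ˢ) ≤ |h|⁻ˢ (A(2|u(x + h)|) + A(2|u(x)|)) / 2`, and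
`∫_{|h| ≥ 1} |h|^(-n - s) dh = n ωₙ / s`.

Mathlib's polar coordinates use the cone measure `Measure.toSphere` of the sphere, whereas `A₀` is
defined with its Hausdorff measure. The former is at most the latter: a set of diameter `D ≤ h` on
the sphere, thickened radially to a shell of thickness `h`, fits into a box with one side close to
`h` and `n - 1` sides close to `D`.
-/

/-- Finite Young functions in the wide sense: convex functions `[0, ∞) → [0, ∞)` vanishing at `0`.
The values of `A` at negative arguments are arbitrary. -/
structure IsConvexYoung (A : ℝ → ℝ) : Prop where
  convexOn : ConvexOn ℝ (Set.Ici 0) A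
  map_zero : A 0 = 0
  nonneg : ∀ t, 0 ≤ t → 0 ≤ A t

namespace IsConvexYoung

variable {A : ℝ → ℝ}

theorem map_mul_le (hA : IsConvexYoung A) {θ t : ℝ} (hθ₀ : 0 ≤ θ) (hθ₁ : θ ≤ 1) (ht : 0 ≤ t) :
    A (θ * t) ≤ θ * A t := by
  have h := hA.convexOn.2 (Set.mem_Ici.2 ht) Set.self_mem_Ici hθ₀ (sub_nonneg.2 hθ₁) (by ring)
  simpa only [smul_eq_mul, mul_zero, add_zero, hA.map_zero] using h

theorem monotoneOn (hA : IsConvexYoung A) : MonotoneOn A (Set.Ici 0) := by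
  intro x hx y hy hxy
  rcases (Set.mem_Ici.1 hy).eq_or_lt with rfl | hy₀
  · rw [le_antisymm hxy hx]
  have hxy₁ : x / y ≤ 1 := (div_le_one hy₀).2 hxy
  calc A x = A (x / y * y) := by rw [div_mul_cancel₀ x hy₀.ne']
    _ ≤ x / y * A y := hA.map_mul_le (div_nonneg hx hy) hxy₁ hy
    _ ≤ A y := mul_le_of_le_one_left (hA.nonneg y hy) hxy₁

theorem nonneg_abs (hA : IsConvexYoung A) (t : ℝ) : 0 ≤ A |t| :=
  hA.nonneg _ (abs_nonneg t)

theorem convexOn_abs (hA : IsConvexYoung A) : ConvexOn ℝ Set.univ fun t => A |t| := by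
  have himage : (fun t : ℝ => |t|) '' Set.univ ⊆ Set.Ici 0 := by
    rintro _ ⟨t, -, rfl⟩
    exact abs_nonneg t
  have hconv : Convex ℝ ((fun t : ℝ => |t|) '' Set.univ) := by
    rw [Set.image_univ, show Set.range (fun t : ℝ => |t|) = Set.Ici 0 from ?_]
    · exact convex_Ici 0
    · exact Set.Subset.antisymm (Set.image_univ ▸ himage) fun t ht => ⟨t, abs_of_nonneg ht⟩
  exact (hA.convexOn.subset himage hconv).comp (convexOn_norm convex_univ)
    (hA.monotoneOn.mono himage)

theorem continuous_abs (hA : IsConvexYoung A) : Continuous fun t => A |t| :=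
  continuousOn_univ.1 (hA.convexOn_abs.continuousOn isOpen_univ)

theorem map_abs_sub_div_le (hA : IsConvexYoung A) (x y : ℝ) {c : ℝ} (hc : 1 ≤ c) :
    A |(x - y) / c| ≤ c⁻¹ * ((A |2 * x| + A |2 * y|) / 2) := by
  have hc₀ : 0 < c := one_pos.trans_le hc
  have midpoint : A |x - y| ≤ (A |2 * x| + A |2 * y|) / 2 := by
    have h := hA.convexOn_abs.2 (Set.mem_univ (2 * x)) (Set.mem_univ (-(2 * y)))
      one_half_pos.le one_half_pos.le (add_halves 1)
    simp only [smul_eq_mul, abs_neg] at h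
    rw [show x - y = 1 / 2 * (2 * x) + 1 / 2 * -(2 * y) by ring]
    linarith
  calc A |(x - y) / c| = A (c⁻¹ * |x - y|) := by
        rw [abs_div, abs_of_pos hc₀, div_eq_inv_mul]
    _ ≤ c⁻¹ * A |x - y| :=
        hA.map_mul_le (inv_nonneg.2 hc₀.le) (inv_le_one_of_one_le₀ hc) (abs_nonneg _)
    _ ≤ c⁻¹ * ((A |2 * x| + A |2 * y|) / 2) := by gcongr

section Averages

variable {Ω : Type*} [MeasurableSpace Ω] {σ : Measure Ω} [IsFiniteMeasure σ] {g : Ω → ℝ}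

theorem norm_map_abs_mul_le (hA : IsConvexYoung A) (r : ℝ) {y : ℝ} (hy : |y| ≤ 1) :
    ‖A |r * y|‖ ≤ A |r| := by
  rw [Real.norm_of_nonneg (hA.nonneg_abs _), abs_mul]
  exact hA.monotoneOn (mul_nonneg (abs_nonneg r) (abs_nonneg y)) (abs_nonneg r)
    (mul_le_of_le_one_right (abs_nonneg r) hy)

theorem integrable_map_abs_mul (hA : IsConvexYoung A) (hg : Measurable g)
    (hg₁ : ∀ᵐ ω ∂σ, |g ω| ≤ 1) (r : ℝ) : Integrable (fun ω => A |r * g ω|) σ :=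
  .of_bound (hA.continuous_abs.measurable.comp (hg.const_mul r)).aestronglyMeasurable (A |r|)
    (hg₁.mono fun _ => hA.norm_map_abs_mul_le r)

theorem integral_map_abs_mul_div_le (hA : IsConvexYoung A) (hg₁ : ∀ᵐ ω ∂σ, |g ω| ≤ 1)
    {r t : ℝ} (hr : 0 < r) (hrt : r ≤ t) :
    (∫ ω, A |r * g ω| ∂σ) / r ≤ A t / t * σ.real Set.univ := by
  have ht : 0 < t := hr.trans_le hrt
  rw [div_le_iff₀ hr]
  calc ∫ ω, A |r * g ω| ∂σ ≤ A |r| * σ.real Set.univ :=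
        (le_abs_self _).trans
          (norm_integral_le_of_norm_le_const (hg₁.mono fun _ => hA.norm_map_abs_mul_le r))
    _ = A (r / t * t) * σ.real Set.univ := by rw [abs_of_pos hr, div_mul_cancel₀ r ht.ne']
    _ ≤ (r / t * A t) * σ.real Set.univ := by
        gcongr
        exact hA.map_mul_le (div_nonneg hr.le ht.le) ((div_le_one ht).2 hrt) ht.le
    _ = A t / t * σ.real Set.univ * r := by ring

theorem ofReal_intervalIntegral_integral_div (hA : IsConvexYoung A) (hg : Measurable g)
    (hg₁ : ∀ᵐ ω ∂σ, |g ω| ≤ 1) {t : ℝ} (ht : 0 ≤ t) :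
    ENNReal.ofReal (∫ r in (0:ℝ)..t, (∫ ω, A (r * |g ω|) ∂σ) / r) =
      ∫⁻ r in Set.Ioo 0 t, ENNReal.ofReal r⁻¹ * ∫⁻ ω, ENNReal.ofReal (A |r * g ω|) ∂σ := by
  have nonneg : ∀ r, 0 < r → 0 ≤ (∫ ω, A |r * g ω| ∂σ) / r := fun r hr =>
    div_nonneg (integral_nonneg fun ω => hA.nonneg_abs _) hr.le
  have measurable : Measurable fun r => (∫ ω, A |r * g ω| ∂σ) / r := by
    have : StronglyMeasurable fun q : ℝ × Ω => A |q.1 * g q.2| :=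
      (hA.continuous_abs.measurable.comp (by fun_prop)).stronglyMeasurable
    exact this.integral_prod_right'.measurable.div measurable_id
  have integrable : IntegrableOn (fun r => (∫ ω, A |r * g ω| ∂σ) / r) (Set.Ioo 0 t) := by
    refine Measure.integrableOn_of_bounded (M := A t / t * σ.real Set.univ) (by simp)
      measurable.aestronglyMeasurable (ae_restrict_of_forall_mem measurableSet_Ioo fun r hr => ?_)
    rw [Real.norm_of_nonneg (nonneg r hr.1)]
    exact hA.integral_map_abs_mul_div_le hg₁ hr.1 hr.2.le
  calc ENNReal.ofReal (∫ r in (0:ℝ)..t, (∫ ω, A (r * |g ω|) ∂σ) / r)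
      = ENNReal.ofReal (∫ r in Set.Ioo 0 t, (∫ ω, A |r * g ω| ∂σ) / r) := by
        rw [intervalIntegral.integral_of_le ht, integral_Ioc_eq_integral_Ioo,
          setIntegral_congr_fun measurableSet_Ioo fun r hr => ?_]
        simp only [abs_mul, abs_of_pos hr.1]
    _ = ∫⁻ r in Set.Ioo 0 t, ENNReal.ofReal ((∫ ω, A |r * g ω| ∂σ) / r) :=
        ofReal_integral_eq_lintegral_ofReal integrable
          (ae_restrict_of_forall_mem measurableSet_Ioo fun r hr => nonneg r hr.1)
    _ = ∫⁻ r in Set.Ioo 0 t, ENNReal.ofReal r⁻¹ * ∫⁻ ω, ENNReal.ofReal (A |r * g ω|) ∂σ := by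
        refine setLIntegral_congr_fun measurableSet_Ioo fun r hr => ?_
        rw [div_eq_inv_mul, ENNReal.ofReal_mul (inv_nonneg.2 hr.1.le),
          ofReal_integral_eq_lintegral_ofReal (hA.integrable_map_abs_mul hg hg₁ r)
            (ae_of_all _ fun ω => hA.nonneg_abs _)]

end Averages

end IsConvexYoung

namespace IsYoungPair

variable {A a : ℝ → ℝ}

theorem intervalIntegrable (hA : IsYoungPair A a) {x y : ℝ} (hx : 0 ≤ x) (hy : 0 ≤ y) :
    IntervalIntegrable a volume x y := by
  obtain ⟨-, mono, -⟩ := hA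
  exact (mono.mono fun z hz => (le_min hx hy).trans hz.1).intervalIntegrable

theorem sub_eq_integral (hA : IsYoungPair A a) {x y : ℝ} (hx : 0 ≤ x) (hy : 0 ≤ y) :
    A y - A x = ∫ τ in x..y, a τ := by
  have ⟨_, _, _, _, _, _, eq_integral⟩ := hA
  rw [eq_integral x hx, eq_integral y hy, intervalIntegral.integral_interval_sub_left
    (hA.intervalIntegrable le_rfl hy) (hA.intervalIntegrable le_rfl hx)]

theorem sub_le_mul (hA : IsYoungPair A a) {x y : ℝ} (hx : 0 ≤ x) (hxy : x ≤ y) :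
    A y - A x ≤ a y * (y - x) := by
  have ⟨_, mono, _⟩ := hA
  have h := intervalIntegral.integral_mono_on hxy (hA.intervalIntegrable hx (hx.trans hxy))
    (intervalIntegrable_const (c := a y))
    fun z hz => mono (hx.trans hz.1) (hx.trans hxy) hz.2
  rwa [← hA.sub_eq_integral hx (hx.trans hxy), intervalIntegral.integral_const, smul_eq_mul,
    mul_comm] at h

theorem mul_le_sub (hA : IsYoungPair A a) {x y : ℝ} (hx : 0 ≤ x) (hxy : x ≤ y) :
    a x * (y - x) ≤ A y - A x := by
  have ⟨_, mono, _⟩ := hA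
  have h := intervalIntegral.integral_mono_on hxy (intervalIntegrable_const (c := a x))
    (hA.intervalIntegrable hx (hx.trans hxy)) fun z hz => mono hx (hx.trans hz.1) hz.1
  rwa [← hA.sub_eq_integral hx (hx.trans hxy), intervalIntegral.integral_const, smul_eq_mul,
    mul_comm] at h

theorem isConvexYoung (hA : IsYoungPair A a) : IsConvexYoung A where
  convexOn := by
    refine convexOn_of_slope_mono_adjacent (convex_Ici 0) fun {x y z} hx _ hxy hyz => ?_
    have hy : 0 ≤ y := (Set.mem_Ici.1 hx).trans hxy.le
    calc (A y - A x) / (y - x) ≤ a y :=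
          (div_le_iff₀ (sub_pos.2 hxy)).2 (hA.sub_le_mul hx hxy.le)
      _ ≤ (A z - A y) / (z - y) := (le_div_iff₀ (sub_pos.2 hyz)).2 (hA.mul_le_sub hy hyz.le)
  map_zero := by
    have ⟨_, _, _, _, _, _, eq_integral⟩ := hA
    rw [eq_integral 0 le_rfl, intervalIntegral.integral_same]
  nonneg t ht := by
    have ⟨nonneg, _, _, _, _, _, eq_integral⟩ := hA
    rw [eq_integral t ht]
    exact intervalIntegral.integral_nonneg ht fun τ _ => nonneg τ

end IsYoungPair

section PolarCoordinates

variable {E : Type*} [NormedAddCommGroup E] [NormedSpace ℝ E] [FiniteDimensional ℝ E]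
  [Nontrivial E] [MeasurableSpace E] [BorelSpace E] (μ : Measure E) [μ.IsAddHaarMeasure]

theorem lintegral_eq_lintegral_toSphere {f : E → ℝ≥0∞} (hf : Measurable f) :
    ∫⁻ x, f x ∂μ = ∫⁻ ω, (∫⁻ r in Set.Ioi (0:ℝ),
      ENNReal.ofReal (r ^ (Module.finrank ℝ E - 1)) * f (r • (ω : E))) ∂μ.toSphere := by
  have hf' : Measurable fun q : Metric.sphere (0 : E) 1 × Set.Ioi (0:ℝ) =>
      f ((q.2 : ℝ) • (q.1 : E)) := by fun_prop
  calc ∫⁻ x, f x ∂μ = ∫⁻ x : ({0}ᶜ : Set E), f x ∂μ.comap Subtype.val := by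
        rw [lintegral_subtype_comap (measurableSet_singleton _).compl, restrict_compl_singleton]
    _ = ∫⁻ q, f ((q.2 : ℝ) • (q.1 : E))
          ∂μ.toSphere.prod (.volumeIoiPow (Module.finrank ℝ E - 1)) := by
        rw [← μ.measurePreserving_homeomorphUnitSphereProd.lintegral_comp hf']
        refine lintegral_congr fun x => ?_
        rw [homeomorphUnitSphereProd_apply_snd_coe, homeomorphUnitSphereProd_apply_fst_coe,
          smul_inv_smul₀ (norm_ne_zero_iff.2 x.2)]
    _ = _ := by
        rw [lintegral_prod _ hf'.aemeasurable]
        refine lintegral_congr fun ω => ?_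
        rw [Measure.volumeIoiPow, lintegral_withDensity_eq_lintegral_mul _ (by fun_prop)
          (by fun_prop)]
        exact lintegral_subtype_comap measurableSet_Ioi
          fun r => ENNReal.ofReal (r ^ (Module.finrank ℝ E - 1)) * f (r • (ω : E))

theorem setLIntegral_norm_rpow_neg_finrank_mul {f : E → ℝ≥0∞} (hf : Measurable f) {I : Set ℝ}
    (hI : MeasurableSet I) :
    ∫⁻ x in norm ⁻¹' I, ENNReal.ofReal (‖x‖ ^ (-(Module.finrank ℝ E : ℝ))) * f x ∂μ =
      ∫⁻ ω, (∫⁻ r in Set.Ioi 0 ∩ I, ENNReal.ofReal r⁻¹ * f (r • (ω : E))) ∂μ.toSphere := by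
  have hI' : MeasurableSet (norm ⁻¹' I : Set E) := measurable_norm hI
  have pow_mul_rpow : ∀ r : ℝ, 0 < r →
      r ^ (Module.finrank ℝ E - 1) * r ^ (-(Module.finrank ℝ E : ℝ)) = r⁻¹ := by
    intro r hr
    obtain ⟨d, hd⟩ := Nat.exists_eq_succ_of_ne_zero (Module.finrank_pos (R := ℝ) (M := E)).ne'
    rw [hd, Real.rpow_neg hr.le, Real.rpow_natCast, Nat.succ_sub_one, pow_succ, mul_inv,
      mul_inv_cancel_left₀ (pow_pos hr d).ne']
  rw [← lintegral_indicator hI',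
    lintegral_eq_lintegral_toSphere μ (Measurable.indicator (by fun_prop) hI')]
  refine lintegral_congr fun ω => ?_
  rw [Set.inter_comm, ← Measure.restrict_restrict hI, ← lintegral_indicator hI]
  refine setLIntegral_congr_fun measurableSet_Ioi fun r hr => ?_
  have norm_smul_eq : ‖r • (ω : E)‖ = r := by
    rw [norm_smul, norm_eq_of_mem_sphere, mul_one, Real.norm_of_nonneg (le_of_lt hr)]
  by_cases hrI : r ∈ I
  · rw [Set.indicator_of_mem hrI,
      Set.indicator_of_mem (by rwa [Set.mem_preimage, norm_smul_eq]), norm_smul_eq, ← mul_assoc,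
      ← ENNReal.ofReal_mul (pow_nonneg (le_of_lt hr) _), pow_mul_rpow r hr]
  · rw [Set.indicator_of_notMem hrI,
      Set.indicator_of_notMem (by rwa [Set.mem_preimage, norm_smul_eq]), mul_zero]

theorem lintegral_Ici_one_rpow {s : ℝ} (hs : 0 < s) :
    ∫⁻ r in Set.Ici (1:ℝ), ENNReal.ofReal r⁻¹ * ENNReal.ofReal (r ^ (-s)) =
      ENNReal.ofReal s⁻¹ := by
  have exponent_lt : -1 - s < -1 := by linarith
  calc ∫⁻ r in Set.Ici (1:ℝ), ENNReal.ofReal r⁻¹ * ENNReal.ofReal (r ^ (-s))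
      = ∫⁻ r in Set.Ioi (1:ℝ), ENNReal.ofReal (r ^ (-1 - s)) := by
        rw [← Measure.restrict_congr_set Ioi_ae_eq_Ici]
        refine setLIntegral_congr_fun measurableSet_Ioi fun r hr => ?_
        have hr₀ : 0 < r := one_pos.trans hr
        rw [← ENNReal.ofReal_mul (inv_nonneg.2 hr₀.le), sub_eq_add_neg, Real.rpow_add hr₀,
          Real.rpow_neg_one]
    _ = ENNReal.ofReal (∫ r in Set.Ioi (1:ℝ), r ^ (-1 - s)) :=
        (ofReal_integral_eq_lintegral_ofReal (integrableOn_Ioi_rpow_of_lt exponent_lt one_pos)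
          (ae_restrict_of_forall_mem measurableSet_Ioi fun r hr =>
            Real.rpow_nonneg (zero_le_one.trans hr.le) _)).symm
    _ = ENNReal.ofReal s⁻¹ := by
        rw [integral_Ioi_rpow_of_lt exponent_lt one_pos, Real.one_rpow]
        congr 1
        rw [show -1 - s + 1 = -s by ring, neg_div_neg_eq, one_div]

theorem setLIntegral_Ici_one_norm_rpow {s : ℝ} (hs : 0 < s) :
    ∫⁻ x in norm ⁻¹' Set.Ici (1:ℝ),
        ENNReal.ofReal (‖x‖ ^ (-(Module.finrank ℝ E : ℝ))) * ENNReal.ofReal (‖x‖ ^ (-s)) ∂μ =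
      ENNReal.ofReal s⁻¹ * (Module.finrank ℝ E * μ (Metric.ball 0 1)) := by
  rw [setLIntegral_norm_rpow_neg_finrank_mul μ (by fun_prop) measurableSet_Ici,
    Set.inter_eq_right.2 (Set.Ici_subset_Ioi.2 one_pos), ← μ.toSphere_apply_univ,
    ← lintegral_const]
  refine lintegral_congr fun ω => (setLIntegral_congr_fun measurableSet_Ici fun r hr => ?_).trans
    (lintegral_Ici_one_rpow hs)
  rw [norm_smul, norm_eq_of_mem_sphere, mul_one, Real.norm_of_nonneg (zero_le_one.trans hr)]

theorem image_rpow_mul_Ioo {θ V : ℝ} (hθ : 0 < θ) (hV : 0 < V) :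
    (fun r : ℝ => r ^ θ * V) '' Set.Ioo 0 1 = Set.Ioo 0 V := by
  ext ρ
  constructor
  · rintro ⟨r, hr, rfl⟩
    exact ⟨mul_pos (Real.rpow_pos_of_pos hr.1 θ) hV,
      mul_lt_of_lt_one_left hV (Real.rpow_lt_one hr.1.le hr.2 hθ)⟩
  · intro hρ
    have hq : 0 < ρ / V := div_pos hρ.1 hV
    refine ⟨(ρ / V) ^ θ⁻¹, ⟨Real.rpow_pos_of_pos hq _,
      Real.rpow_lt_one hq.le ((div_lt_one hV).2 hρ.2) (inv_pos.2 hθ)⟩, ?_⟩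
    simp only [Real.rpow_inv_rpow hq.le hθ.ne', div_mul_cancel₀ ρ hV.ne']

theorem lintegral_Ioo_inv_mul_comp_rpow {θ V : ℝ} (hθ : 0 < θ) (hV : 0 < V) (g : ℝ → ℝ≥0∞) :
    ENNReal.ofReal θ * ∫⁻ r in Set.Ioo 0 1, ENNReal.ofReal r⁻¹ * g (r ^ θ * V) =
      ∫⁻ ρ in Set.Ioo 0 V, ENNReal.ofReal ρ⁻¹ * g ρ := by
  have hderiv : ∀ r ∈ Set.Ioo (0:ℝ) 1,
      HasDerivWithinAt (fun r : ℝ => r ^ θ * V) (θ * r ^ (θ - 1) * V) (Set.Ioo 0 1) r :=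
    fun r hr => ((Real.hasDerivAt_rpow_const (Or.inl hr.1.ne')).mul_const V).hasDerivWithinAt
  have hinj : Set.InjOn (fun r : ℝ => r ^ θ * V) (Set.Ioo 0 1) := fun r hr r' hr' h =>
    (Real.rpow_left_inj hr.1.le hr'.1.le hθ.ne').1 (mul_right_cancel₀ hV.ne' h)
  rw [← image_rpow_mul_Ioo hθ hV,
    lintegral_image_eq_lintegral_abs_deriv_mul measurableSet_Ioo hderiv hinj,
    ← lintegral_const_mul' _ _ ENNReal.ofReal_ne_top]
  refine setLIntegral_congr_fun measurableSet_Ioo fun r ⟨hr, _⟩ => ?_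
  have : 0 < r ^ θ := Real.rpow_pos_of_pos hr θ
  have jacobian : |θ * r ^ (θ - 1) * V| * (r ^ θ * V)⁻¹ = θ * r⁻¹ := by
    rw [abs_of_pos (by positivity), Real.rpow_sub_one hr.ne']
    field_simp
  simp only [← mul_assoc, ← ENNReal.ofReal_mul hθ.le, ← ENNReal.ofReal_mul (abs_nonneg _),
    jacobian]

theorem setLIntegral_Iio_one_comp_norm_rpow_smul {f : E → ℝ≥0∞} (hf : Measurable f) {s V : ℝ}
    (hs : s < 1) (hV : 0 < V) :
    ENNReal.ofReal (1 - s) * ∫⁻ x in norm ⁻¹' Set.Iio 1,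
        ENNReal.ofReal (‖x‖ ^ (-(Module.finrank ℝ E : ℝ))) * f ((V * ‖x‖ ^ (-s)) • x) ∂μ =
      ∫⁻ ω, (∫⁻ ρ in Set.Ioo 0 V, ENNReal.ofReal ρ⁻¹ * f (ρ • (ω : E))) ∂μ.toSphere := by
  rw [setLIntegral_norm_rpow_neg_finrank_mul μ (by fun_prop) measurableSet_Iio, Set.Ioi_inter_Iio,
    ← lintegral_const_mul' _ _ ENNReal.ofReal_ne_top]
  refine lintegral_congr fun ω => ?_
  rw [← lintegral_Ioo_inv_mul_comp_rpow (sub_pos.2 hs) hV]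
  congr 1
  refine setLIntegral_congr_fun measurableSet_Ioo fun r ⟨hr, _⟩ => ?_
  simp only [norm_smul, norm_eq_of_mem_sphere, mul_one, Real.norm_of_nonneg hr.le, smul_smul]
  rw [mul_assoc, sub_eq_neg_add, Real.rpow_add_one hr.ne', mul_comm V]

end PolarCoordinates

section SphereMeasure

open Set
open scoped Pointwise

section AddHaar

variable {E : Type*} [NormedAddCommGroup E] [NormedSpace ℝ E] [FiniteDimensional ℝ E]
  [MeasurableSpace E] [BorelSpace E] (μ : Measure E) [μ.IsAddHaarMeasure]

-- The dilation by `1 + h` multiplies the volume of the cone over `T` by at least `1 + d * h`, and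
-- the dilated cone is covered by the cone itself and the shell.
theorem toSphere_mul_ofReal_le_measure_Ico_smul {T : Set (Metric.sphere (0 : E) 1)}
    (hT : MeasurableSet T) {h : ℝ} (hh : 0 ≤ h) :
    μ.toSphere T * ENNReal.ofReal h ≤ μ (Ico 1 (1 + h) • ((↑) '' T : Set E)) := by
  set d := Module.finrank ℝ E
  set cone : Set E := Ioo (0:ℝ) 1 • ((↑) '' T)
  set shell : Set E := Ico 1 (1 + h) • ((↑) '' T)
  have cone_finite : μ cone ≠ ⊤ := by
    refine ((measure_mono ?_).trans_lt (measure_ball_lt_top (μ := μ) (x := 0) (r := 1))).ne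
    rintro _ ⟨r, hr, _, ⟨ω, -, rfl⟩, rfl⟩
    simpa [norm_smul, abs_of_pos hr.1] using hr.2
  have dilation_subset : (1 + h) • cone ⊆ cone ∪ shell := by
    rintro _ ⟨_, ⟨r, hr, ω, hω, rfl⟩, rfl⟩
    have hr' : (1 + h) * r < 1 + h := mul_lt_of_lt_one_right (by linarith) hr.2
    change (1 + h) • r • ω ∈ _
    rw [smul_smul]
    rcases lt_or_ge ((1 + h) * r) 1 with hlt | hge
    · exact .inl (smul_mem_smul ⟨mul_pos (by linarith) hr.1, hlt⟩ hω)
    · exact .inr (smul_mem_smul ⟨hge, hr'⟩ hω)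
  have bernoulli : 1 + d * ENNReal.ofReal h ≤ ENNReal.ofReal ((1 + h) ^ d) := by
    rw [← ENNReal.ofReal_one, ← ENNReal.ofReal_natCast, ← ENNReal.ofReal_mul d.cast_nonneg,
      ← ENNReal.ofReal_add zero_le_one (by positivity)]
    exact ENNReal.ofReal_le_ofReal (one_add_mul_le_pow (by linarith) d)
  have expansion : μ cone + d * μ cone * ENNReal.ofReal h ≤ μ cone + μ shell :=
    calc μ cone + d * μ cone * ENNReal.ofReal h
        = (1 + d * ENNReal.ofReal h) * μ cone := by ring
      _ ≤ ENNReal.ofReal ((1 + h) ^ d) * μ cone := by gcongr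
      _ = μ ((1 + h) • cone) := by rw [Measure.addHaar_smul, abs_of_nonneg (by positivity)]
      _ ≤ μ cone + μ shell := (measure_mono dilation_subset).trans (measure_union_le _ _)
  rw [μ.toSphere_apply' hT]
  exact (ENNReal.add_le_add_iff_left cone_finite).1 expansion

end AddHaar

variable {E : Type*} [NormedAddCommGroup E] [InnerProductSpace ℝ E]

theorem abs_inner_smul_sub_smul_le_of_norm_eq_one {p ω ω' : E} (hp : ‖p‖ = 1) (hω : ‖ω‖ = 1)
    (hω' : ‖ω'‖ = 1) {D h : ℝ} (hpω : ‖ω - p‖ ≤ D) (hpω' : ‖ω' - p‖ ≤ D) (hDh : D ≤ h)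
    (hh : h ≤ 1) {r r' : ℝ} (hr : r ∈ Ico 1 (1 + h)) (hr' : r' ∈ Ico 1 (1 + h)) :
    |⟪p, r • ω - r' • ω'⟫| ≤ h * (1 + 2 * h) := by
  have inner_mem : ∀ {ζ : E}, ‖ζ‖ = 1 → ‖ζ - p‖ ≤ D → 1 - h ^ 2 / 2 ≤ ⟪p, ζ⟫ ∧ ⟪p, ζ⟫ ≤ 1 := by
    intro ζ hζ hpζ
    have dist_sq : ‖ζ - p‖ ^ 2 = 2 - 2 * ⟪p, ζ⟫ := by
      rw [norm_sub_sq_real, hζ, hp, real_inner_comm]; ring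
    have : ‖ζ - p‖ ^ 2 ≤ h ^ 2 := by gcongr; exact hpζ.trans hDh
    constructor <;> nlinarith [sq_nonneg ‖ζ - p‖]
  obtain ⟨lower, upper⟩ := inner_mem hω hpω
  obtain ⟨lower', upper'⟩ := inner_mem hω' hpω'
  rw [inner_sub_right, real_inner_smul_right, real_inner_smul_right, abs_le]
  constructor <;> nlinarith [hr.1, hr.2, hr'.1, hr'.2, norm_nonneg (ω - p)]

theorem abs_inner_smul_sub_smul_le_of_inner_eq_zero {b p ω ω' : E} (hb : ‖b‖ = 1)
    (hbp : ⟪b, p⟫ = 0) {D h : ℝ} (hωω' : ‖ω - ω'‖ ≤ D) (hpω' : ‖ω' - p‖ ≤ D)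
    {r r' : ℝ} (hr : r ∈ Ico 1 (1 + h)) (hr' : r' ∈ Ico 1 (1 + h)) :
    |⟪b, r • ω - r' • ω'⟫| ≤ (1 + 2 * h) * D := by
  have abs_inner_le : ∀ {ζ : E}, ‖ζ‖ ≤ D → |⟪b, ζ⟫| ≤ D := fun {ζ} hζ =>
    (abs_real_inner_le_norm b ζ).trans (by rwa [hb, one_mul])
  have hr₀ : |r| ≤ 1 + h := by rw [abs_of_pos (by linarith [hr.1])]; exact hr.2.le
  have hrr' : |r - r'| ≤ h := abs_le.2 ⟨by linarith [hr.1, hr'.2], by linarith [hr.2, hr'.1]⟩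
  calc |⟪b, r • ω - r' • ω'⟫| = |r * ⟪b, ω - ω'⟫ + (r - r') * ⟪b, ω' - p⟫| := by
        simp only [inner_sub_right, real_inner_smul_right, hbp]
        congr 1
        ring
    _ ≤ |r| * |⟪b, ω - ω'⟫| + |r - r'| * |⟪b, ω' - p⟫| := by
        rw [← abs_mul, ← abs_mul]
        exact abs_add_le _ _
    _ ≤ (1 + h) * D + h * D := by
        gcongr
        · exact (abs_nonneg r).trans hr₀
        · exact abs_inner_le hωω'
        · exact (abs_nonneg _).trans hrr'
        · exact abs_inner_le hpω'
    _ = (1 + 2 * h) * D := by ring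

theorem norm_stereoToFun_le_two {v x : E} (hx : ‖x‖ = 1) (hxv : ⟪v, x⟫ ≤ 0) :
    ‖stereoToFun v x‖ ≤ 2 := by
  have hden : 1 ≤ 1 - ⟪v, x⟫ := by linarith
  rw [stereoToFun_apply, innerSL_apply_apply, norm_smul, Real.norm_of_nonneg (by positivity)]
  calc 2 / (1 - ⟪v, x⟫) * ‖(ℝ ∙ v)ᗮ.orthogonalProjectionOnto x‖ ≤ 2 * ‖x‖ := by
        gcongr
        · exact div_le_self zero_le_two hden
        · exact Submodule.norm_orthogonalProjectionOnto_apply_le _ x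
    _ = 2 := by rw [hx, mul_one]

theorem mem_stereoInvFunAux_image_closedBall {v x : E} (hv : ‖v‖ = 1) (hx : ‖x‖ = 1)
    (hxv : ⟪v, x⟫ ≤ 0) :
    x ∈ (fun w : (ℝ ∙ v)ᗮ => stereoInvFunAux v (w : E)) '' Metric.closedBall 0 2 := by
  refine ⟨stereoToFun v x, mem_closedBall_zero_iff.2 (norm_stereoToFun_le_two hx hxv), ?_⟩
  have hne : x ≠ v := by
    rintro rfl
    rw [real_inner_self_eq_norm_sq, hv] at hxv
    norm_num at hxv
  exact congrArg Subtype.val (stereo_left_inv hv (x := ⟨x, mem_sphere_zero_iff_norm.2 hx⟩) hne)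

theorem lintegral_sphere_comp_inner_eq_of_norm_eq [MeasurableSpace E] [BorelSpace E] (d : ℝ)
    {v e : E} (hve : ‖v‖ = ‖e‖) (f : ℝ → ℝ≥0∞) :
    ∫⁻ ω in Metric.sphere 0 1, f ⟪ω, v⟫ ∂Measure.hausdorffMeasure d =
      ∫⁻ ω in Metric.sphere 0 1, f ⟪ω, e⟫ ∂Measure.hausdorffMeasure d := by
  obtain ⟨L, rfl⟩ : ∃ L : E ≃ₗᵢ[ℝ] E, L v = e := ⟨_, Submodule.reflection_sub hve⟩
  have preserving := (L.toIsometryEquiv.measurePreserving_hausdorffMeasure d).restrict_preimage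
    (s := Metric.sphere 0 1) Metric.isClosed_sphere.measurableSet
  have preimage_sphere : L.toIsometryEquiv ⁻¹' Metric.sphere (0 : E) 1 = Metric.sphere 0 1 := by
    ext x; simp
  rw [preimage_sphere] at preserving
  rw [← preserving.lintegral_comp_emb L.toHomeomorph.measurableEmbedding fun ω => f ⟪ω, L v⟫]
  exact lintegral_congr fun ω => congrArg f (L.inner_map_map ω v).symm

variable [FiniteDimensional ℝ E]

theorem exists_orthonormalBasis_apply_eq {p : E} (hp : ‖p‖ = 1) :
    ∃ (b : OrthonormalBasis (Fin (Module.finrank ℝ E)) ℝ E) (i : Fin (Module.finrank ℝ E)),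
      b i = p := by
  have : Nontrivial E := ⟨p, 0, norm_ne_zero_iff.1 (hp ▸ one_ne_zero)⟩
  let i : Fin (Module.finrank ℝ E) := ⟨0, Module.finrank_pos⟩
  have orthonormal : Orthonormal ℝ (({i} : Set _).domRestrict fun _ => p) :=
    ⟨fun _ => hp, fun j j' hj => (hj (Subsingleton.elim j j')).elim⟩
  obtain ⟨b, hb⟩ := orthonormal.exists_orthonormalBasis_extension_of_card_eq (by simp)
  exact ⟨b, i, hb i rfl⟩

variable [MeasurableSpace E] [BorelSpace E]

theorem volume_le_prod_of_abs_inner_sub_le {ι : Type*} [Fintype ι] (b : OrthonormalBasis ι ℝ E)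
    {S : Set E} {c : ι → ℝ} (hc : ∀ x ∈ S, ∀ y ∈ S, ∀ i, |⟪b i, x - y⟫| ≤ c i) :
    volume S ≤ ∏ i, ENNReal.ofReal (c i) := by
  let f : E ≃ᵐ (ι → ℝ) := b.measurableEquiv.trans (MeasurableEquiv.toLp 2 (ι → ℝ)).symm
  have f_preserving : MeasurePreserving f volume volume :=
    (PiLp.volume_preserving_ofLp ι).comp b.measurePreserving_measurableEquiv
  have f_apply : ∀ x i, f x i = ⟪b i, x⟫ := b.repr_apply_apply
  rw [← preimage_image_eq S f.injective, f_preserving.measure_preimage_equiv]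
  refine (Real.volume_pi_le_prod_diam _).trans (Finset.prod_le_prod' fun i _ => ?_)
  refine Metric.ediam_le ?_
  rintro _ ⟨_, ⟨x, hx, rfl⟩, rfl⟩ _ ⟨_, ⟨y, hy, rfl⟩, rfl⟩
  rw [edist_dist, Real.dist_eq, Function.eval, Function.eval, f_apply, f_apply, ← inner_sub_right]
  exact ENNReal.ofReal_le_ofReal (hc x hx y hy i)

theorem volume_Ico_smul_le {T : Set E} (hT : T ⊆ Metric.sphere 0 1) {D h : ℝ}
    (hD : ∀ ω ∈ T, ∀ ω' ∈ T, ‖ω - ω'‖ ≤ D) (hDh : D ≤ h) (hh : h ≤ 1) :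
    volume (Ico 1 (1 + h) • T) ≤ ENNReal.ofReal (h * (1 + 2 * h)) *
      ENNReal.ofReal ((1 + 2 * h) * D) ^ (Module.finrank ℝ E - 1) := by
  rcases T.eq_empty_or_nonempty with rfl | ⟨p, hpT⟩
  · simp
  have hnorm : ∀ ω ∈ T, ‖ω‖ = 1 := fun ω hω => mem_sphere_zero_iff_norm.1 (hT hω)
  obtain ⟨b, i₀, rfl⟩ := exists_orthonormalBasis_apply_eq (hnorm p hpT)
  have box := volume_le_prod_of_abs_inner_sub_le b (S := Ico 1 (1 + h) • T)
    (c := Function.update (fun _ => (1 + 2 * h) * D) i₀ (h * (1 + 2 * h))) <| by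
      rintro _ ⟨r, hr, ω, hω, rfl⟩ _ ⟨r', hr', ω', hω', rfl⟩ i
      rcases eq_or_ne i i₀ with rfl | hi
      · rw [Function.update_self]
        exact abs_inner_smul_sub_smul_le_of_norm_eq_one (b.norm_eq_one i) (hnorm ω hω)
          (hnorm ω' hω') (hD ω hω _ hpT) (hD ω' hω' _ hpT) hDh hh hr hr'
      · rw [Function.update_of_ne hi]
        exact abs_inner_smul_sub_smul_le_of_inner_eq_zero (b.norm_eq_one i)
          (b.inner_eq_zero hi) (hD ω hω ω' hω') (hD ω' hω' _ hpT) hr hr'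
  rw [← Finset.mul_prod_erase _ _ (Finset.mem_univ i₀), Function.update_self] at box
  rwa [Finset.prod_congr rfl fun i hi => by
      rw [Function.update_of_ne (Finset.ne_of_mem_erase hi)],
    Finset.prod_const, Finset.card_erase_of_mem (Finset.mem_univ i₀), Finset.card_univ,
    Fintype.card_fin] at box

theorem toSphere_le_mul_ediam_pow_of_ediam_le {h : ℝ} (hh₀ : 0 < h) (hh₁ : h ≤ 1)
    {T : Set (Metric.sphere (0 : E) 1)} (hT : Metric.ediam T ≤ ENNReal.ofReal h) :
    (volume : Measure E).toSphere T ≤ ENNReal.ofReal ((1 + 2 * h) ^ Module.finrank ℝ E) *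
      Metric.ediam T ^ (Module.finrank ℝ E - 1) := by
  rcases T.eq_empty_or_nonempty with rfl | ⟨p, -⟩
  · simp
  have : Nontrivial E := ⟨p, 0, ne_zero_of_mem_unit_sphere p⟩
  have ediam_ne_top : Metric.ediam T ≠ ⊤ := ne_top_of_le_ne_top ENNReal.ofReal_ne_top hT
  set D := (Metric.ediam T).toReal
  have ofReal_D : ENNReal.ofReal D = Metric.ediam T := ENNReal.ofReal_toReal ediam_ne_top
  have hDh : D ≤ h := ENNReal.toReal_le_of_le_ofReal hh₀.le hT
  have dist_le : ∀ ω ∈ ((↑) '' closure T : Set E), ∀ ω' ∈ ((↑) '' closure T : Set E),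
      ‖ω - ω'‖ ≤ D := by
    rintro _ ⟨ω, hω, rfl⟩ _ ⟨ω', hω', rfl⟩
    rw [← dist_eq_norm, ← Subtype.dist_eq, dist_edist]
    refine ENNReal.toReal_mono ediam_ne_top ?_
    rw [← Metric.ediam_closure]
    exact Metric.edist_le_ediam_of_mem hω hω'
  have ofReal_h_ne_zero : ENNReal.ofReal h ≠ 0 := (ENNReal.ofReal_pos.2 hh₀).ne'
  rw [← ENNReal.mul_le_mul_iff_left ofReal_h_ne_zero ENNReal.ofReal_ne_top]
  calc (volume : Measure E).toSphere T * ENNReal.ofReal h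
      ≤ (volume : Measure E).toSphere (closure T) * ENNReal.ofReal h := by
        gcongr; exact subset_closure
    _ ≤ volume (Ico 1 (1 + h) • ((↑) '' closure T : Set E)) :=
        toSphere_mul_ofReal_le_measure_Ico_smul volume isClosed_closure.measurableSet hh₀.le
    _ ≤ ENNReal.ofReal (h * (1 + 2 * h)) *
          ENNReal.ofReal ((1 + 2 * h) * D) ^ (Module.finrank ℝ E - 1) :=
        volume_Ico_smul_le (Subtype.coe_image_subset _ _) dist_le hDh hh₁
    _ = ENNReal.ofReal ((1 + 2 * h) ^ Module.finrank ℝ E) *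
          Metric.ediam T ^ (Module.finrank ℝ E - 1) * ENNReal.ofReal h := by
        rw [ENNReal.ofReal_mul hh₀.le, ENNReal.ofReal_mul (by positivity), mul_pow, ofReal_D,
          ENNReal.ofReal_pow (by positivity),
          ← mul_pow_sub_one (Module.finrank_pos (R := ℝ) (M := E)).ne']
        ring

theorem toSphere_le_hausdorffMeasure [Nontrivial E] :
    (volume : Measure E).toSphere ≤ Measure.hausdorffMeasure ((Module.finrank ℝ E : ℝ) - 1) := by
  set d := Module.finrank ℝ E
  have hd : (d : ℝ) - 1 = (d - 1 : ℕ) := (Nat.cast_pred Module.finrank_pos).symm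
  have almost : ∀ h ∈ Ioo (0:ℝ) 1, ∀ T, (volume : Measure E).toSphere T ≤
      ENNReal.ofReal ((1 + 2 * h) ^ d) * Measure.hausdorffMeasure ((d : ℝ) - 1) T := by
    intro h hh T
    have constant_ne_zero : ENNReal.ofReal ((1 + 2 * h) ^ d) ≠ 0 :=
      (ENNReal.ofReal_pos.2 (pow_pos (by linarith [hh.1]) d)).ne'
    rw [← ENNReal.inv_mul_le_iff constant_ne_zero ENNReal.ofReal_ne_top]
    refine Measure.le_hausdorffMeasure _ ((ENNReal.ofReal ((1 + 2 * h) ^ d))⁻¹ • _)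
      (ENNReal.ofReal h) (ENNReal.ofReal_pos.2 hh.1) (fun S hS => ?_) T
    rw [Measure.smul_apply, smul_eq_mul,
      ENNReal.inv_mul_le_iff constant_ne_zero ENNReal.ofReal_ne_top, hd, ENNReal.rpow_natCast]
    exact toSphere_le_mul_ediam_pow_of_ediam_le hh.1 hh.2.le hS
  refine Measure.le_intro fun T _ _ => ?_
  have constant_tendsto : Tendsto (fun h : ℝ => ENNReal.ofReal ((1 + 2 * h) ^ d)) (𝓝[>] 0)
      (𝓝 1) := by
    have : Continuous fun h : ℝ => ENNReal.ofReal ((1 + 2 * h) ^ d) :=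
      ENNReal.continuous_ofReal.comp (by fun_prop)
    simpa using (this.tendsto 0).mono_left nhdsWithin_le_nhds
  have bound_tendsto := ENNReal.Tendsto.mul_const
    (b := Measure.hausdorffMeasure ((d : ℝ) - 1) T) constant_tendsto (.inl one_ne_zero)
  rw [one_mul] at bound_tendsto
  refine ge_of_tendsto bound_tendsto ?_
  filter_upwards [Ioo_mem_nhdsGT one_pos] with h hh using almost h hh T

theorem lintegral_toSphere_le_lintegral_hausdorffMeasure [Nontrivial E] (f : E → ℝ≥0∞) :
    ∫⁻ ω, f ω ∂(volume : Measure E).toSphere ≤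
      ∫⁻ ω in Metric.sphere 0 1, f ω ∂Measure.hausdorffMeasure ((Module.finrank ℝ E : ℝ) - 1) := by
  have hd : 0 ≤ (Module.finrank ℝ E : ℝ) - 1 :=
    sub_nonneg.2 (Nat.one_le_cast.2 Module.finrank_pos)
  calc ∫⁻ ω, f ω ∂(volume : Measure E).toSphere
      ≤ ∫⁻ ω : Metric.sphere (0 : E) 1, f ω
          ∂Measure.hausdorffMeasure ((Module.finrank ℝ E : ℝ) - 1) :=
        lintegral_mono' toSphere_le_hausdorffMeasure le_rfl
    _ = _ := by
        rw [← (MeasurableEmbedding.subtype_coe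
            Metric.isClosed_sphere.measurableSet).lintegral_map f,
          isometry_subtype_coe.map_hausdorffMeasure (.inl hd), Subtype.range_coe]

theorem hausdorffMeasure_stereoInvFunAux_image_closedBall_lt_top {v : E} (hv : v ≠ 0) (R : ℝ) :
    Measure.hausdorffMeasure ((Module.finrank ℝ E : ℝ) - 1)
      ((fun w : (ℝ ∙ v)ᗮ => stereoInvFunAux v (w : E)) '' Metric.closedBall 0 R) < ⊤ := by
  have : Nontrivial E := ⟨v, 0, hv⟩
  have : Fact (Module.finrank ℝ E = Module.finrank ℝ E - 1 + 1) :=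
    ⟨(Nat.succ_pred_eq_of_pos Module.finrank_pos).symm⟩
  have hd : (Module.finrank ℝ E : ℝ) - 1 = Module.finrank ℝ (ℝ ∙ v)ᗮ := by
    rw [Submodule.finrank_orthogonal_span_singleton (n := Module.finrank ℝ E - 1) hv,
      Nat.cast_pred Module.finrank_pos]
  have smooth : ContDiff ℝ 1 fun w : (ℝ ∙ v)ᗮ => stereoInvFunAux v (w : E) :=
    contDiff_stereoInvFunAux.comp (ℝ ∙ v)ᗮ.subtypeL.contDiff
  have compact : IsCompact (Metric.closedBall (0 : (ℝ ∙ v)ᗮ) R) := isCompact_closedBall 0 R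
  obtain ⟨K, hK⟩ := smooth.locallyLipschitz.locallyLipschitzOn.exists_lipschitzOnWith_of_compact
    compact
  rw [hd]
  refine (hK.hausdorffMeasure_image_le (Nat.cast_nonneg _)).trans_lt (ENNReal.mul_lt_top ?_ ?_)
  · exact ENNReal.rpow_lt_top_of_nonneg (Nat.cast_nonneg _) ENNReal.coe_ne_top
  · exact compact.measure_lt_top

theorem hausdorffMeasure_sphere_lt_top :
    Measure.hausdorffMeasure ((Module.finrank ℝ E : ℝ) - 1) (Metric.sphere (0 : E) 1) < ⊤ := by
  rcases (Metric.sphere (0 : E) 1).eq_empty_or_nonempty with hempty | ⟨v, hv⟩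
  · rw [hempty, measure_empty]
    exact ENNReal.zero_lt_top
  rw [mem_sphere_zero_iff_norm] at hv
  have hv' : ‖-v‖ = 1 := by rw [norm_neg, hv]
  have hv₀ : v ≠ 0 := norm_ne_zero_iff.1 (hv ▸ one_ne_zero)
  refine (measure_mono fun x hx => ?_).trans_lt (measure_union_lt_top
    (hausdorffMeasure_stereoInvFunAux_image_closedBall_lt_top hv₀ 2)
    (hausdorffMeasure_stereoInvFunAux_image_closedBall_lt_top (neg_ne_zero.2 hv₀) 2))
  rw [mem_sphere_zero_iff_norm] at hx
  rcases le_total ⟪v, x⟫ 0 with hle | hge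
  · exact .inl (mem_stereoInvFunAux_image_closedBall hv hx hle)
  · exact .inr (mem_stereoInvFunAux_image_closedBall hv' hx (by rwa [inner_neg_left, neg_nonpos]))

end SphereMeasure

section DifferenceQuotients

theorem map_sub_le_lintegral_map_fderiv {E F : Type*} [NormedAddCommGroup E] [NormedSpace ℝ E]
    [NormedAddCommGroup F] [NormedSpace ℝ F] [FiniteDimensional ℝ F] {Φ : F → ℝ} {u : E → F}
    (hΦ : ConvexOn ℝ Set.univ Φ) (hΦ₀ : ∀ y, 0 ≤ Φ y) (hu : ContDiff ℝ 1 u) (x h : E) :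
    ENNReal.ofReal (Φ (u (x + h) - u x)) ≤
      ∫⁻ t in Set.Ioc (0:ℝ) 1, ENNReal.ofReal (Φ (fderiv ℝ u (x + t • h) h)) := by
  have : CompleteSpace F := FiniteDimensional.complete ℝ F
  have : IsProbabilityMeasure (volume.restrict (Set.Ioc (0:ℝ) 1)) := ⟨by simp⟩
  have hΦc : Continuous Φ := continuousOn_univ.1 (hΦ.continuousOn isOpen_univ)
  have deriv_continuous : Continuous fun t : ℝ => fderiv ℝ u (x + t • h) h :=
    ((hu.continuous_fderiv one_ne_zero).comp (by fun_prop)).clm_apply continuous_const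
  have hΦ_continuous : Continuous fun t : ℝ => Φ (fderiv ℝ u (x + t • h) h) :=
    hΦc.comp deriv_continuous
  have hasDerivAt_line (t : ℝ) :
      HasDerivAt (fun t : ℝ => u (x + t • h)) (fderiv ℝ u (x + t • h) h) t := by
    refine (hu.differentiable one_ne_zero _).hasFDerivAt.comp_hasDerivAt t ?_
    simpa using ((hasDerivAt_id t).smul_const h).const_add x
  have ftc : u (x + h) - u x = ∫ t in Set.Ioc (0:ℝ) 1, fderiv ℝ u (x + t • h) h := by
    rw [← intervalIntegral.integral_of_le zero_le_one,
      intervalIntegral.integral_eq_sub_of_hasDerivAt (fun t _ => hasDerivAt_line t)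
        (deriv_continuous.intervalIntegrable 0 1), one_smul, zero_smul, add_zero]
  rw [← ofReal_integral_eq_lintegral_ofReal hΦ_continuous.integrableOn_Ioc
    (.of_forall fun t => hΦ₀ _), ftc]
  exact ENNReal.ofReal_le_ofReal <| hΦ.map_integral_le hΦc.continuousOn isClosed_univ (by simp)
    deriv_continuous.integrableOn_Ioc hΦ_continuous.integrableOn_Ioc

theorem lintegral_map_sub_le_lintegral_map_fderiv {E F : Type*} [NormedAddCommGroup E]
    [NormedSpace ℝ E] [MeasurableSpace E] [BorelSpace E] (μ : Measure E) [SFinite μ]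
    [μ.IsAddRightInvariant] [NormedAddCommGroup F] [NormedSpace ℝ F] [FiniteDimensional ℝ F]
    {Φ : F → ℝ} {u : E → F} (hΦ : ConvexOn ℝ Set.univ Φ) (hΦ₀ : ∀ y, 0 ≤ Φ y)
    (hu : ContDiff ℝ 1 u) (h : E) :
    ∫⁻ x, ENNReal.ofReal (Φ (u (x + h) - u x)) ∂μ ≤
      ∫⁻ x, ENNReal.ofReal (Φ (fderiv ℝ u x h)) ∂μ := by
  have hΦc : Continuous Φ := continuousOn_univ.1 (hΦ.continuousOn isOpen_univ)
  have hΦu : Continuous fun x => ENNReal.ofReal (Φ (fderiv ℝ u x h)) :=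
    ENNReal.continuous_ofReal.comp
      (hΦc.comp ((hu.continuous_fderiv one_ne_zero).clm_apply continuous_const))
  have hmeas : Measurable fun q : E × ℝ =>
      ENNReal.ofReal (Φ (fderiv ℝ u (q.1 + q.2 • h) h)) :=
    (hΦu.comp (by fun_prop : Continuous fun q : E × ℝ => q.1 + q.2 • h)).measurable
  calc ∫⁻ x, ENNReal.ofReal (Φ (u (x + h) - u x)) ∂μ
      ≤ ∫⁻ x, (∫⁻ t in Set.Ioc (0:ℝ) 1, ENNReal.ofReal (Φ (fderiv ℝ u (x + t • h) h))) ∂μ :=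
        lintegral_mono fun x => map_sub_le_lintegral_map_fderiv hΦ hΦ₀ hu x h
    _ = ∫⁻ t in Set.Ioc (0:ℝ) 1, (∫⁻ x, ENNReal.ofReal (Φ (fderiv ℝ u (x + t • h) h)) ∂μ) :=
        lintegral_lintegral_swap hmeas.aemeasurable
    _ = ∫⁻ _ in Set.Ioc (0:ℝ) 1, (∫⁻ x, ENNReal.ofReal (Φ (fderiv ℝ u x h)) ∂μ) :=
        lintegral_congr fun t =>
          lintegral_add_right_eq_self (fun x => ENNReal.ofReal (Φ (fderiv ℝ u x h))) (t • h)
    _ = ∫⁻ x, ENNReal.ofReal (Φ (fderiv ℝ u x h)) ∂μ := by simp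

theorem IsConvexYoung.lintegral_map_abs_sub_div_le {A : ℝ → ℝ} (hA : IsConvexYoung A)
    {G : Type*} [AddGroup G] [MeasurableSpace G] [MeasurableAdd G] (μ : Measure G)
    [μ.IsAddRightInvariant] {u : G → ℝ} (hu : Measurable u) {c : ℝ} (hc : 1 ≤ c) (h : G) :
    ∫⁻ x, ENNReal.ofReal (A |(u (x + h) - u x) / c|) ∂μ ≤
      ENNReal.ofReal c⁻¹ * orliczModular μ A (fun x => 2 * u x) := by
  set f : G → ℝ≥0∞ := fun x => ENNReal.ofReal (A |2 * u x|) / 2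
  have hf : Measurable f :=
    (hA.continuous_abs.measurable.comp (hu.const_mul 2)).ennreal_ofReal.div_const 2
  have f_eq (x : G) : f x = ENNReal.ofReal (A |2 * u x| / 2) := by
    rw [ENNReal.ofReal_div_of_pos two_pos, ENNReal.ofReal_ofNat]
  calc ∫⁻ x, ENNReal.ofReal (A |(u (x + h) - u x) / c|) ∂μ
      ≤ ∫⁻ x, ENNReal.ofReal c⁻¹ * (f (x + h) + f x) ∂μ := by
        refine lintegral_mono fun x => ?_
        rw [f_eq, f_eq, ← ENNReal.ofReal_add (div_nonneg (hA.nonneg_abs _) zero_le_two)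
          (div_nonneg (hA.nonneg_abs _) zero_le_two), ← ENNReal.ofReal_mul (by positivity),
          ← add_div]
        exact ENNReal.ofReal_le_ofReal (hA.map_abs_sub_div_le _ _ hc)
    _ = ENNReal.ofReal c⁻¹ * (∫⁻ x, f x ∂μ + ∫⁻ x, f x ∂μ) := by
        rw [lintegral_const_mul' _ _ ENNReal.ofReal_ne_top, lintegral_add_right _ hf,
          lintegral_add_right_eq_self f h]
    _ = ENNReal.ofReal c⁻¹ * orliczModular μ A (fun x => 2 * u x) := by
        rw [← lintegral_add_right _ hf]
        simp only [f, ENNReal.add_halves, orliczModular]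

end DifferenceQuotients

section Energies

variable {n : ℕ} {A : ℝ → ℝ}

theorem IsConvexYoung.ofReal_A0 (hA : IsConvexYoung A) {e : Rn n} (he : ‖e‖ = 1) {t : ℝ}
    (ht : 0 ≤ t) :
    ENNReal.ofReal (A0 A e t) = ∫⁻ r in Set.Ioo 0 t, ENNReal.ofReal r⁻¹ *
      ∫⁻ ω in Metric.sphere 0 1, ENNReal.ofReal (A |r * ⟪ω, e⟫|)
        ∂Measure.hausdorffMeasure ((n : ℝ) - 1) := by
  have : IsFiniteMeasure ((Measure.hausdorffMeasure ((n : ℝ) - 1)).restrict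
      (Metric.sphere (0 : Rn n) 1)) :=
    ⟨by simpa only [Measure.restrict_apply_univ, finrank_euclideanSpace_fin] using
      hausdorffMeasure_sphere_lt_top (E := Rn n)⟩
  refine hA.ofReal_intervalIntegral_integral_div (by fun_prop) ?_ ht
  filter_upwards [ae_restrict_mem Metric.isClosed_sphere.measurableSet] with ω hω
  calc |⟪ω, e⟫| ≤ ‖ω‖ * ‖e‖ := abs_real_inner_le_norm ω e
    _ = 1 := by rw [mem_sphere_zero_iff_norm.1 hω, he, one_mul]

theorem IsConvexYoung.setLIntegral_Iio_one_map_abs_inner_div_le (hA : IsConvexYoung A)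
    {e : Rn n} (he : ‖e‖ = 1) {s : ℝ} (hs : s < 1) (v : Rn n) :
    ENNReal.ofReal (1 - s) * ∫⁻ h in norm ⁻¹' Set.Iio 1, ENNReal.ofReal (‖h‖ ^ (-(n:ℝ))) *
      ENNReal.ofReal (A |⟪v, h⟫ / ‖h‖ ^ s|) ≤ ENNReal.ofReal (A0 A e ‖v‖) := by
  rcases eq_or_ne v 0 with rfl | hv
  · simp [hA.map_zero]
  have : Nontrivial (Rn n) := ⟨v, 0, hv⟩
  have hV : 0 < ‖v‖ := norm_pos_iff.2 hv
  set w : Rn n := ‖v‖⁻¹ • v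
  have v_eq : v = ‖v‖ • w := (smul_inv_smul₀ hV.ne' v).symm
  have norm_w : ‖w‖ = ‖e‖ := by
    rw [he, norm_smul, norm_inv, norm_norm, inv_mul_cancel₀ hV.ne']
  set f : Rn n → ℝ≥0∞ := fun h => ENNReal.ofReal (A |⟪h, w⟫|)
  have hf : Measurable f :=
    (hA.continuous_abs.measurable.comp (by fun_prop)).ennreal_ofReal
  have integrand_eq (h : Rn n) :
      ENNReal.ofReal (A |⟪v, h⟫ / ‖h‖ ^ s|) = f ((‖v‖ * ‖h‖ ^ (-s)) • h) := by
    simp only [f]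
    rw [real_inner_smul_left, v_eq, real_inner_smul_left, ← v_eq, real_inner_comm,
      Real.rpow_neg (norm_nonneg h)]
    ring_nf
  have polar := setLIntegral_Iio_one_comp_norm_rpow_smul (volume : Measure (Rn n)) hf hs hV
  rw [finrank_euclideanSpace_fin] at polar
  simp only [integrand_eq]
  rw [polar, hA.ofReal_A0 he hV.le, lintegral_lintegral_swap (by fun_prop)]
  refine lintegral_mono fun ρ => ?_
  rw [lintegral_const_mul' _ _ ENNReal.ofReal_ne_top]
  gcongr
  refine (lintegral_toSphere_le_lintegral_hausdorffMeasure fun ω => f (ρ • ω)).trans_eq ?_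
  simp only [f, real_inner_smul_left, finrank_euclideanSpace_fin]
  exact lintegral_sphere_comp_inner_eq_of_norm_eq _ norm_w fun y => ENNReal.ofReal (A |ρ * y|)

theorem lintegral_nuMeasure {F : Rn n × Rn n → ℝ≥0∞} (hF : Measurable F) :
    ∫⁻ p, F p ∂nuMeasure n =
      ∫⁻ h, ENNReal.ofReal (‖h‖ ^ (-(n:ℝ))) * ∫⁻ x, F (x + h, x) := by
  set k : Rn n → ℝ≥0∞ := fun h => ENNReal.ofReal (‖h‖ ^ (-(n:ℝ)))
  have hk : Measurable k := by fun_prop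
  have hkF : Measurable fun p : Rn n × Rn n => k (p.1 - p.2) * F p := by fun_prop
  calc ∫⁻ p, F p ∂nuMeasure n = ∫⁻ p : Rn n × Rn n, k (p.1 - p.2) * F p :=
        lintegral_withDensity_eq_lintegral_mul _ (by fun_prop) hF
    _ = ∫⁻ x, ∫⁻ y, k (y - x) * F (y, x) := lintegral_prod_symm _ hkF.aemeasurable
    _ = ∫⁻ x, ∫⁻ h, k h * F (x + h, x) := by
        refine lintegral_congr fun x => ?_
        rw [← lintegral_add_left_eq_self (fun y => k (y - x) * F (y, x)) x]
        simp only [add_sub_cancel_left]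
    _ = ∫⁻ h, ∫⁻ x, k h * F (x + h, x) := lintegral_lintegral_swap (by fun_prop)
    _ = ∫⁻ h, k h * ∫⁻ x, F (x + h, x) :=
        lintegral_congr fun h => lintegral_const_mul' _ _ ENNReal.ofReal_ne_top

theorem IsConvexYoung.Js_eq_lintegral (hA : IsConvexYoung A) {u : Rn n → ℝ} (hu : Measurable u)
    (s : ℝ) :
    Js A s u = ENNReal.ofReal (1 - s) * ∫⁻ h, ENNReal.ofReal (‖h‖ ^ (-(n:ℝ))) *
      ∫⁻ x, ENNReal.ofReal (A |(u (x + h) - u x) / ‖h‖ ^ s|) := by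
  have hF : Measurable fun p : Rn n × Rn n => ENNReal.ofReal (A |holderQuot s u p|) :=
    (hA.continuous_abs.measurable.comp (by unfold holderQuot; fun_prop)).ennreal_ofReal
  rw [Js, lintegral_nuMeasure hF]
  simp only [holderQuot, add_sub_cancel_left]

theorem IsConvexYoung.setLIntegral_Iio_one_le_JlimSmooth (hA : IsConvexYoung A) {e : Rn n}
    (he : ‖e‖ = 1) {u : Rn n → ℝ} (hu : ContDiff ℝ 1 u) {s : ℝ} (hs : s < 1) :
    ENNReal.ofReal (1 - s) * ∫⁻ h in norm ⁻¹' Set.Iio 1, ENNReal.ofReal (‖h‖ ^ (-(n:ℝ))) *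
      ∫⁻ x, ENNReal.ofReal (A |(u (x + h) - u x) / ‖h‖ ^ s|) ≤ JlimSmooth A e u := by
  set k : Rn n → ℝ≥0∞ := fun h => ENNReal.ofReal (‖h‖ ^ (-(n:ℝ)))
  set Ψ : Rn n → Rn n → ℝ≥0∞ := fun h x => ENNReal.ofReal (A |⟪gradient u x, h⟫ / ‖h‖ ^ s|)
  have gradient_measurable : Measurable (gradient u) :=
    ((InnerProductSpace.toDual ℝ (Rn n)).symm.continuous.comp
      (hu.continuous_fderiv one_ne_zero)).measurable
  have hΨ : Measurable (Function.uncurry fun h x => k h * Ψ h x) :=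
    .mul (by fun_prop) (hA.continuous_abs.measurable.comp (by fun_prop)).ennreal_ofReal
  have jensen (h : Rn n) :
      ∫⁻ x, ENNReal.ofReal (A |(u (x + h) - u x) / ‖h‖ ^ s|) ≤ ∫⁻ x, Ψ h x := by
    have convex : ConvexOn ℝ Set.univ fun y => A |y / ‖h‖ ^ s| := by
      simp only [div_eq_inv_mul]
      exact hA.convexOn_abs.comp_linearMap (LinearMap.mulLeft ℝ (‖h‖ ^ s)⁻¹)
    simpa only [Ψ, inner_gradient_left] using
      lintegral_map_sub_le_lintegral_map_fderiv volume convex (fun _ => hA.nonneg_abs _) hu h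
  calc _ ≤ ENNReal.ofReal (1 - s) * ∫⁻ h in norm ⁻¹' Set.Iio 1, k h * ∫⁻ x, Ψ h x := by
        exact mul_le_mul_right (lintegral_mono fun h => mul_le_mul_right (jensen h) (k h)) _
    _ = ENNReal.ofReal (1 - s) * ∫⁻ h in norm ⁻¹' Set.Iio 1, ∫⁻ x, k h * Ψ h x := by
        simp only [k, lintegral_const_mul' _ _ ENNReal.ofReal_ne_top]
    _ = ∫⁻ x, ENNReal.ofReal (1 - s) * ∫⁻ h in norm ⁻¹' Set.Iio 1, k h * Ψ h x := by
        rw [lintegral_lintegral_swap hΨ.aemeasurable,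
          lintegral_const_mul' _ _ ENNReal.ofReal_ne_top]
    _ ≤ JlimSmooth A e u := lintegral_mono fun x =>
        hA.setLIntegral_Iio_one_map_abs_inner_div_le he hs (gradient u x)

theorem IsConvexYoung.setLIntegral_Ici_one_le_orliczModular [Nontrivial (Rn n)]
    (hA : IsConvexYoung A) {u : Rn n → ℝ} (hu : Measurable u) {s : ℝ} (hs : s ∈ Set.Ioo (0 : ℝ) 1) :
    ENNReal.ofReal (1 - s) * ∫⁻ h in norm ⁻¹' Set.Ici 1, ENNReal.ofReal (‖h‖ ^ (-(n:ℝ))) *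
      ∫⁻ x, ENNReal.ofReal (A |(u (x + h) - u x) / ‖h‖ ^ s|) ≤
      ENNReal.ofReal ((1 - s) / s * nOmega n) * orliczModular volume A (fun x => 2 * u x) := by
  set M := orliczModular volume A (fun x => 2 * u x)
  have far : ∀ h ∈ norm ⁻¹' Set.Ici (1:ℝ),
      ∫⁻ x, ENNReal.ofReal (A |(u (x + h) - u x) / ‖h‖ ^ s|) ≤
        ENNReal.ofReal (‖h‖ ^ (-s)) * M := fun h hh => by
    rw [Real.rpow_neg (norm_nonneg h)]
    exact hA.lintegral_map_abs_sub_div_le volume hu (Real.one_le_rpow hh hs.1.le) h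
  have tail := setLIntegral_Ici_one_norm_rpow (volume : Measure (Rn n)) hs.1
  rw [finrank_euclideanSpace_fin] at tail
  have nOmega_eq : ENNReal.ofReal (nOmega n) = n * volume (Metric.ball (0 : Rn n) 1) := by
    rw [nOmega, ENNReal.ofReal_mul n.cast_nonneg, ENNReal.ofReal_natCast,
      ENNReal.ofReal_toReal measure_ball_lt_top.ne]
  calc _ ≤ ENNReal.ofReal (1 - s) * ∫⁻ h : Rn n in norm ⁻¹' Set.Ici 1,
          ENNReal.ofReal (‖h‖ ^ (-(n:ℝ))) * ENNReal.ofReal (‖h‖ ^ (-s)) * M := by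
        refine mul_le_mul_right
          (setLIntegral_mono' (measurableSet_Ici.preimage measurable_norm) fun h hh => ?_) _
        rw [mul_assoc]
        gcongr
        exact far h hh
    _ = ENNReal.ofReal ((1 - s) / s * nOmega n) * M := by
        rw [lintegral_mul_const _ (by fun_prop), tail, div_eq_mul_inv,
          ENNReal.ofReal_mul (mul_nonneg (sub_nonneg.2 hs.2.le) (inv_nonneg.2 hs.1.le)),
          ENNReal.ofReal_mul (sub_nonneg.2 hs.2.le), nOmega_eq]
        ring

theorem IsConvexYoung.orliczModular_two_mul_eq_ofReal_integral {X : Type*} [TopologicalSpace X]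
    [MeasurableSpace X] [OpensMeasurableSpace X] {μ : Measure X} [IsFiniteMeasureOnCompacts μ]
    (hA : IsConvexYoung A) {u : X → ℝ} (hu : Continuous u) (hsupp : HasCompactSupport u) :
    orliczModular μ A (fun x => 2 * u x) = ENNReal.ofReal (∫ x, A (2 * |u x|) ∂μ) := by
  have integrable : Integrable (fun x => A |2 * u x|) μ :=
    (hA.continuous_abs.comp (hu.const_mul 2)).integrable_of_hasCompactSupport
      (hsupp.comp_left (g := fun t => A |2 * t|) (by simp [hA.map_zero]))
  rw [orliczModular, ← ofReal_integral_eq_lintegral_ofReal integrable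
    (.of_forall fun x => hA.nonneg_abs _)]
  simp only [abs_mul, abs_two]

end Energies

theorem statement9_general {n : ℕ} {A : ℝ → ℝ} (hA : IsConvexYoung A) {e : Rn n} (he : ‖e‖ = 1)
    {u : Rn n → ℝ} (hu : ContDiff ℝ 1 u) {s : ℝ} (hs : s ∈ Set.Ioo (0 : ℝ) 1) :
    Js A s u ≤ JlimSmooth A e u +
      ENNReal.ofReal ((1 - s) / s * nOmega n) * orliczModular volume A (fun x => 2 * u x) := by
  have : Nontrivial (Rn n) := ⟨e, 0, norm_ne_zero_iff.1 (he ▸ one_ne_zero)⟩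
  have hu' : Measurable u := hu.continuous.measurable
  have hball : MeasurableSet (norm ⁻¹' Set.Iio 1 : Set (Rn n)) :=
    measurableSet_Iio.preimage measurable_norm
  rw [hA.Js_eq_lintegral hu', ← lintegral_add_compl _ hball, mul_add, ← Set.preimage_compl,
    Set.compl_Iio]
  exact add_le_add (hA.setLIntegral_Iio_one_le_JlimSmooth he hu hs.2)
    (hA.setLIntegral_Ici_one_le_orliczModular hu' hs)

/-- For an arbitrary Young function `A`, `u ∈ C²_c(ℝⁿ)` and
`s ∈ (0,1)`, `𝒥_s(u) ≤ 𝒥(u) + ((1−s)/s) n ω_n ∫ A(2|u|) dx`. -/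
theorem statement9 {n : ℕ} (A a : ℝ → ℝ) (hA : IsYoungPair A a)
    (e : Rn n) (he : ‖e‖ = 1)
    (u : Rn n → ℝ) (hu : ContDiff ℝ 2 u) (hsupp : HasCompactSupport u)
    (s : ℝ) (hs : s ∈ Set.Ioo (0:ℝ) 1) :
    Js A s u ≤ JlimSmooth A e u
      + ENNReal.ofReal ((1 - s) / s * nOmega n * ∫ x, A (2 * |u x|)) := by
  have hA' := hA.isConvexYoung
  have coeff_nonneg : 0 ≤ (1 - s) / s * nOmega n :=
    mul_nonneg (div_nonneg (sub_nonneg.2 hs.2.le) hs.1.le)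
      (mul_nonneg n.cast_nonneg ENNReal.toReal_nonneg)
  rw [ENNReal.ofReal_mul coeff_nonneg,
    ← hA'.orliczModular_two_mul_eq_ofReal_integral hu.continuous hsupp]
  exact statement9_general hA' he (hu.of_le one_le_two) hs
end
end

section
/- Let A be an arbitrary Young function and u ∈ C²_c(ℝⁿ) with supp u ⊂ B_R(0) for some R > 1. For s ∈ (0,1) set F_s(x) = (1−s) ∫_{ℝⁿ} A(|u(x) − u(y)| / |x−y|^s) |x−y|^{−n} dy. Then for every x with |x| < 2R and every s ∈ (0,1), F_s(x) ≤ nω_n A(‖∇u‖_∞) + ((1−s)/s) nω_n A(2‖u‖_∞), where nω_n = H^{n−1}(S^{n−1}). -/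
open MeasureTheory Filter Topology
open scoped ENNReal RealInnerProductSpace

noncomputable section

/-! The integral is split at `|x - y| = 1`. On the unit ball about `x` the quotient
`|u x - u y| / |x - y| ^ s` is at most `|x - y| ^ (1 - s) ‖∇u‖_∞` by the mean value inequality,
and off it at most `|x - y| ^ (-s) (2 ‖u‖_∞)`. Both powers of `|x - y|` are at most `1` there, so
they can be pulled out of `A`, which is convex with `A 0 = 0`. What remains are the radial
integrals of `r ^ (1 - s - n)` over the ball and of `r ^ (-s - n)` over its complement, that is,
`n ω_n / (1 - s)` and `n ω_n / s`. -/

open Module Set Metric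

section StarShaped

/-- Nonnegative functions on `[0, ∞)` whose graph lies below its chords from the origin, i.e. for
which `t ↦ A t / t` is nondecreasing: the part of convexity of a Young function that the estimate
needs. Values at negative arguments are ignored. -/
structure IsStarShaped (A : ℝ → ℝ) : Prop where
  nonneg : ∀ ⦃t⦄, 0 ≤ t → 0 ≤ A t
  map_mul_le : ∀ ⦃c t⦄, 0 ≤ c → c ≤ 1 → 0 ≤ t → A (c * t) ≤ c * A t

variable {A a : ℝ → ℝ}

theorem IsStarShaped.map_zero (hA : IsStarShaped A) : A 0 = 0 :=
  le_antisymm (by simpa using hA.map_mul_le le_rfl zero_le_one le_rfl) (hA.nonneg le_rfl)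

theorem IsStarShaped.monotoneOn (hA : IsStarShaped A) : MonotoneOn A (Ici 0) := by
  intro p (hp : 0 ≤ p) q (hq : 0 ≤ q) hpq
  rcases hq.eq_or_lt with rfl | hq_pos
  · rw [le_antisymm hpq hp]
  have hratio : p / q ≤ 1 := div_le_one_of_le₀ hpq hq
  calc A p = A (p / q * q) := by rw [div_mul_cancel₀ p hq_pos.ne']
    _ ≤ p / q * A q := hA.map_mul_le (by positivity) hratio hq
    _ ≤ A q := mul_le_of_le_one_left (hA.nonneg hq) hratio

theorem IsStarShaped.map_le_mul (hA : IsStarShaped A) {c t w : ℝ} (hc : 0 ≤ c) (hc1 : c ≤ 1)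
    (ht : 0 ≤ t) (hw : 0 ≤ w) (hwt : w ≤ c * t) : A w ≤ c * A t :=
  (hA.monotoneOn hw (hw.trans hwt) hwt).trans (hA.map_mul_le hc hc1 ht)

theorem IsStarShaped.comp_aemeasurable {α : Type*} [MeasurableSpace α] {μ : Measure α}
    (hA : IsStarShaped A) {g : α → ℝ} (hg : AEMeasurable g μ) (hg_nonneg : ∀ x, 0 ≤ g x) :
    AEMeasurable (fun x ↦ A (g x)) μ := by
  have hmono : Monotone fun t ↦ A (max t 0) := fun p q hpq ↦
    hA.monotoneOn (le_max_right p 0) (le_max_right q 0) (max_le_max_right 0 hpq)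
  simpa only [Function.comp_def, max_eq_left (hg_nonneg _)] using
    hmono.measurable.comp_aemeasurable hg

theorem IsYoungPair.eq_integral (hA : IsYoungPair A a) {t : ℝ} (ht : 0 ≤ t) :
    A t = ∫ τ in (0 : ℝ)..t, a τ :=
  hA.2.2.2.2.2.2 t ht

theorem IsYoungPair.isStarShaped (hA : IsYoungPair A a) : IsStarShaped A where
  nonneg t ht := by
    rw [hA.eq_integral ht]
    exact intervalIntegral.integral_nonneg ht fun τ _ ↦ hA.1 τ
  map_mul_le c t hc hc1 ht := by
    have ha_mono : MonotoneOn a (Ici 0) := hA.2.1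
    have hsubst : A (c * t) = c * ∫ τ in (0 : ℝ)..t, a (c * τ) := by
      rw [intervalIntegral.mul_integral_comp_mul_left, mul_zero,
        hA.eq_integral (mul_nonneg hc ht)]
    have hIcc : uIcc 0 t ⊆ Ici 0 := by
      rw [uIcc_of_le ht]
      exact Icc_subset_Ici_self
    have ha_mono_scaled : MonotoneOn (fun τ ↦ a (c * τ)) (Ici 0) := fun p hp q hq hpq ↦
      ha_mono (mul_nonneg hc hp) (mul_nonneg hc hq) (mul_le_mul_of_nonneg_left hpq hc)
    rw [hsubst, hA.eq_integral ht]
    refine mul_le_mul_of_nonneg_left (intervalIntegral.integral_mono_on ht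
      (ha_mono_scaled.mono hIcc).intervalIntegrable (ha_mono.mono hIcc).intervalIntegrable
      fun τ hτ ↦ ?_) hc
    exact ha_mono (mul_nonneg hc hτ.1) hτ.1 (mul_le_of_le_one_left hτ.1 hc1)

theorem IsStarShaped.map_div_rpow_le_of_le_one (hA : IsStarShaped A) {L r s w : ℝ}
    (hr : 0 < r) (hr1 : r ≤ 1) (hs : s ≤ 1) (hw : 0 ≤ w) (hwL : w ≤ L * r) :
    A (w / r ^ s) ≤ r ^ (1 - s) * A L := by
  have hL : 0 ≤ L := nonneg_of_mul_nonneg_left (hw.trans hwL) hr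
  refine hA.map_le_mul (by positivity) (Real.rpow_le_one hr.le hr1 (by linarith)) hL
    (by positivity) ?_
  rw [Real.rpow_sub hr, Real.rpow_one, div_mul_eq_mul_div, mul_comm]
  gcongr

theorem IsStarShaped.map_div_rpow_le_of_one_le (hA : IsStarShaped A) {M r s w : ℝ}
    (hr : 1 ≤ r) (hs : 0 ≤ s) (hw : 0 ≤ w) (hwM : w ≤ M) :
    A (w / r ^ s) ≤ r ^ (-s) * A M := by
  have hr_nonneg : 0 ≤ r := zero_le_one.trans hr
  refine hA.map_le_mul (by positivity) (Real.rpow_le_one_of_one_le_of_nonpos hr (by linarith))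
    (hw.trans hwM) (by positivity) ?_
  rw [Real.rpow_neg hr_nonneg, inv_mul_eq_div]
  gcongr

end StarShaped

section RadialPowers

theorem closedBall_eq_norm_sub_preimage {E : Type*} [SeminormedAddCommGroup E] (x : E) (r : ℝ) :
    closedBall x r = {y | ‖x - y‖ ∈ Iic r} := by
  ext y
  simp [dist_eq_norm_sub']

theorem compl_closedBall_eq_norm_sub_preimage {E : Type*} [SeminormedAddCommGroup E] (x : E)
    (r : ℝ) : (closedBall x r)ᶜ = {y | ‖x - y‖ ∈ Ioi r} := by
  ext y
  simp [dist_eq_norm_sub']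

theorem pow_pred_mul_rpow_sub {d : ℕ} (hd : d ≠ 0) {t : ℝ} (ht : 0 < t) (p : ℝ) :
    t ^ (d - 1) * t ^ (p - d) = t ^ (p - 1) := by
  rw [← Real.rpow_natCast, ← Real.rpow_add ht, Nat.cast_pred (Nat.pos_of_ne_zero hd)]
  congr 1
  ring

variable {E : Type*} [NormedAddCommGroup E] [NormedSpace ℝ E] [FiniteDimensional ℝ E]
  [MeasurableSpace E] [BorelSpace E] (μ : Measure E) [μ.IsAddHaarMeasure]

theorem integrableOn_norm_sub_preimage_iff [Nontrivial E] {F : Type*} [NormedAddCommGroup F]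
    [NormedSpace ℝ F] (x : E) {S : Set ℝ} (hS : MeasurableSet S) (f : ℝ → F) :
    IntegrableOn (fun y ↦ f ‖x - y‖) {y | ‖x - y‖ ∈ S} μ ↔
      IntegrableOn (fun t ↦ t ^ (finrank ℝ E - 1) • f t) (S ∩ Ioi 0) := by
  have hpre : MeasurableSet {y : E | ‖x - y‖ ∈ S} := by measurability
  have hradial := integrable_fun_norm_addHaar μ (f := S.indicator f)
  simp only [← indicator_smul, integrableOn_indicator_iff hS] at hradial
  rw [← integrable_comp_sub_left _ x] at hradial
  rw [← integrable_indicator_iff hpre, ← hradial]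
  rfl

theorem setIntegral_norm_sub_preimage [Nontrivial E] {F : Type*} [NormedAddCommGroup F]
    [NormedSpace ℝ F] (x : E) {S : Set ℝ} (hS : MeasurableSet S) (f : ℝ → F) :
    ∫ y in {y | ‖x - y‖ ∈ S}, f ‖x - y‖ ∂μ = finrank ℝ E • μ.real (ball 0 1) •
      ∫ t in S ∩ Ioi 0, t ^ (finrank ℝ E - 1) • f t := by
  have hpre : MeasurableSet {y : E | ‖x - y‖ ∈ S} := by measurability
  have hradial := integral_fun_norm_addHaar μ (S.indicator f)
  rw [← integral_sub_left_eq_self _ μ x] at hradial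
  rw [← integral_indicator hpre, inter_comm, ← setIntegral_indicator hS]
  simp only [indicator_smul]
  rw [← hradial]
  rfl

theorem integrableOn_norm_sub_rpow_iff [Nontrivial E] (x : E) {S : Set ℝ} (hS : MeasurableSet S)
    (p : ℝ) :
    IntegrableOn (fun y ↦ ‖x - y‖ ^ (p - finrank ℝ E)) {y | ‖x - y‖ ∈ S} μ ↔
      IntegrableOn (fun t ↦ t ^ (p - 1)) (S ∩ Ioi 0) := by
  rw [integrableOn_norm_sub_preimage_iff μ x hS fun t ↦ t ^ (p - finrank ℝ E)]
  exact integrableOn_congr_fun (fun t ht ↦ pow_pred_mul_rpow_sub finrank_pos.ne' ht.2 p)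
    (hS.inter measurableSet_Ioi)

theorem setIntegral_norm_sub_rpow [Nontrivial E] (x : E) {S : Set ℝ} (hS : MeasurableSet S)
    (p : ℝ) :
    ∫ y in {y | ‖x - y‖ ∈ S}, ‖x - y‖ ^ (p - finrank ℝ E) ∂μ =
      finrank ℝ E * μ.real (ball 0 1) * ∫ t in S ∩ Ioi 0, t ^ (p - 1) := by
  rw [setIntegral_norm_sub_preimage μ x hS fun t ↦ t ^ (p - finrank ℝ E), nsmul_eq_mul,
    smul_eq_mul, mul_assoc]
  congr 2
  exact setIntegral_congr_fun (hS.inter measurableSet_Ioi)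
    fun t ht ↦ pow_pred_mul_rpow_sub finrank_pos.ne' ht.2 p

theorem integrableOn_closedBall_norm_sub_rpow (x : E) {p r : ℝ} (hp : 0 < p) (hr : 0 ≤ r) :
    IntegrableOn (fun y ↦ ‖x - y‖ ^ (p - finrank ℝ E)) (closedBall x r) μ := by
  cases subsingleton_or_nontrivial E
  · simp [norm_of_subsingleton, finrank_zero_of_subsingleton, Real.zero_rpow hp.ne']
  rw [closedBall_eq_norm_sub_preimage, integrableOn_norm_sub_rpow_iff μ x measurableSet_Iic,
    Iic_inter_Ioi, ← intervalIntegrable_iff_integrableOn_Ioc_of_le hr]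
  exact intervalIntegral.intervalIntegrable_rpow' (by linarith)

theorem setIntegral_closedBall_norm_sub_rpow (x : E) {p r : ℝ} (hp : 0 < p) (hr : 0 ≤ r) :
    ∫ y in closedBall x r, ‖x - y‖ ^ (p - finrank ℝ E) ∂μ =
      finrank ℝ E * μ.real (ball 0 1) * (r ^ p / p) := by
  cases subsingleton_or_nontrivial E
  · simp [norm_of_subsingleton, finrank_zero_of_subsingleton, Real.zero_rpow hp.ne']
  rw [closedBall_eq_norm_sub_preimage, setIntegral_norm_sub_rpow μ x measurableSet_Iic,
    Iic_inter_Ioi, ← intervalIntegral.integral_of_le hr, integral_rpow (Or.inl (by linarith)),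
    sub_add_cancel, Real.zero_rpow hp.ne', sub_zero]

theorem integrableOn_compl_closedBall_norm_sub_rpow (x : E) {p r : ℝ} (hp : 0 < p) (hr : 0 < r) :
    IntegrableOn (fun y ↦ ‖x - y‖ ^ (-p - finrank ℝ E)) (closedBall x r)ᶜ μ := by
  cases subsingleton_or_nontrivial E
  · simp [Subsingleton.eq_univ_of_nonempty (nonempty_closedBall (x := x) |>.2 hr.le)]
  rw [compl_closedBall_eq_norm_sub_preimage, integrableOn_norm_sub_rpow_iff μ x measurableSet_Ioi,
    Ioi_inter_Ioi, max_eq_left hr.le]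
  exact integrableOn_Ioi_rpow_of_lt (by linarith) hr

theorem setIntegral_compl_closedBall_norm_sub_rpow (x : E) {p r : ℝ} (hp : 0 < p) (hr : 0 < r) :
    ∫ y in (closedBall x r)ᶜ, ‖x - y‖ ^ (-p - finrank ℝ E) ∂μ =
      finrank ℝ E * μ.real (ball 0 1) * (r ^ (-p) / p) := by
  cases subsingleton_or_nontrivial E
  · simp [Subsingleton.eq_univ_of_nonempty (nonempty_closedBall (x := x) |>.2 hr.le),
      finrank_zero_of_subsingleton]
  rw [compl_closedBall_eq_norm_sub_preimage, setIntegral_norm_sub_rpow μ x measurableSet_Ioi,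
    Ioi_inter_Ioi, max_eq_left hr.le, integral_Ioi_rpow_of_lt (by linarith) hr, sub_add_cancel,
    neg_div_neg_eq]

end RadialPowers

section ModularIntegrand

variable {E F : Type*} [NormedAddCommGroup E] [NormedSpace ℝ E] [NormedAddCommGroup F]
  {A : ℝ → ℝ} {u : E → F} {s L M : ℝ} {x y : E}

/-- The integrand `A (|u x - u y| / |x - y| ^ s) |x - y| ^ (-n)` of `F_s(x)`, for maps between
normed spaces. -/
def modularIntegrand (A : ℝ → ℝ) (s : ℝ) (u : E → F) (x y : E) : ℝ :=
  A (‖u x - u y‖ / ‖x - y‖ ^ s) * ‖x - y‖ ^ (-(finrank ℝ E : ℝ))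

theorem modularIntegrand_nonneg (hA : IsStarShaped A) (s : ℝ) (u : E → F) (x y : E) :
    0 ≤ modularIntegrand A s u x y :=
  mul_nonneg (hA.nonneg (by positivity)) (by positivity)

theorem aestronglyMeasurable_modularIntegrand [MeasurableSpace E] [OpensMeasurableSpace E]
    {μ : Measure E} (hA : IsStarShaped A) (hu : AEStronglyMeasurable u μ) (s : ℝ) (x : E) :
    AEStronglyMeasurable (modularIntegrand A s u x) μ := by
  have hnorm : Measurable fun y ↦ ‖x - y‖ := (continuous_const.sub continuous_id).norm.measurable
  have hquot : AEMeasurable (fun y ↦ ‖u x - u y‖ / ‖x - y‖ ^ s) μ :=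
    (aestronglyMeasurable_const.sub hu).norm.aemeasurable.div (hnorm.pow_const s).aemeasurable
  exact ((hA.comp_aemeasurable hquot fun y ↦ by positivity).mul
    (hnorm.pow_const _).aemeasurable).aestronglyMeasurable

theorem modularIntegrand_le_of_mem_closedBall (hA : IsStarShaped A) (hs : s ≤ 1) (hL : 0 ≤ L)
    (hlip : ‖u x - u y‖ ≤ L * ‖x - y‖) (hy : y ∈ closedBall x 1) :
    modularIntegrand A s u x y ≤ A L * ‖x - y‖ ^ (1 - s - finrank ℝ E) := by
  rcases eq_or_ne x y with rfl | hxy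
  · have hzero : modularIntegrand A s u x x = 0 := by simp [modularIntegrand, hA.map_zero]
    exact hzero.trans_le (mul_nonneg (hA.nonneg hL) (by positivity))
  have hdist_pos : 0 < ‖x - y‖ := norm_pos_iff.2 (sub_ne_zero.2 hxy)
  have hdist : ‖x - y‖ ≤ 1 := by simpa [dist_eq_norm_sub'] using hy
  calc modularIntegrand A s u x y
      ≤ ‖x - y‖ ^ (1 - s) * A L * ‖x - y‖ ^ (-(finrank ℝ E : ℝ)) :=
        mul_le_mul_of_nonneg_right
          (hA.map_div_rpow_le_of_le_one hdist_pos hdist hs (norm_nonneg _) hlip) (by positivity)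
    _ = A L * ‖x - y‖ ^ (1 - s - finrank ℝ E) := by
        rw [sub_eq_add_neg (1 - s), Real.rpow_add hdist_pos]
        ring

theorem modularIntegrand_le_of_notMem_closedBall (hA : IsStarShaped A) (hs : 0 ≤ s)
    (hM : ‖u x - u y‖ ≤ M) (hy : y ∉ closedBall x 1) :
    modularIntegrand A s u x y ≤ A M * ‖x - y‖ ^ (-s - finrank ℝ E) := by
  have hdist : 1 < ‖x - y‖ := by simpa [dist_eq_norm_sub'] using hy
  calc modularIntegrand A s u x y
      ≤ ‖x - y‖ ^ (-s) * A M * ‖x - y‖ ^ (-(finrank ℝ E : ℝ)) :=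
        mul_le_mul_of_nonneg_right
          (hA.map_div_rpow_le_of_one_le hdist.le hs (norm_nonneg _) hM) (by positivity)
    _ = A M * ‖x - y‖ ^ (-s - finrank ℝ E) := by
        rw [sub_eq_add_neg (-s), Real.rpow_add (zero_lt_one.trans hdist)]
        ring

variable [FiniteDimensional ℝ E] [MeasurableSpace E] [BorelSpace E] {μ : Measure E}
  [μ.IsAddHaarMeasure]

theorem integrableOn_closedBall_modularIntegrand (hA : IsStarShaped A)
    (hu : AEStronglyMeasurable u μ) (hs : s < 1) (hL : 0 ≤ L)
    (hlip : ∀ y, ‖u x - u y‖ ≤ L * ‖x - y‖) :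
    IntegrableOn (modularIntegrand A s u x) (closedBall x 1) μ :=
  ((integrableOn_closedBall_norm_sub_rpow μ x (sub_pos.2 hs) zero_le_one).const_mul (A L)).mono'
    (aestronglyMeasurable_modularIntegrand hA hu s x).restrict <|
    ae_restrict_of_forall_mem measurableSet_closedBall fun y hy ↦ by
      rw [Real.norm_of_nonneg (modularIntegrand_nonneg hA s u x y)]
      exact modularIntegrand_le_of_mem_closedBall hA hs.le hL (hlip y) hy

theorem integrableOn_compl_closedBall_modularIntegrand (hA : IsStarShaped A)
    (hu : AEStronglyMeasurable u μ) (hs : 0 < s) (hM : ∀ y, ‖u x - u y‖ ≤ M) :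
    IntegrableOn (modularIntegrand A s u x) (closedBall x 1)ᶜ μ :=
  ((integrableOn_compl_closedBall_norm_sub_rpow μ x hs zero_lt_one).const_mul (A M)).mono'
    (aestronglyMeasurable_modularIntegrand hA hu s x).restrict <|
    ae_restrict_of_forall_mem measurableSet_closedBall.compl fun y hy ↦ by
      rw [Real.norm_of_nonneg (modularIntegrand_nonneg hA s u x y)]
      exact modularIntegrand_le_of_notMem_closedBall hA hs.le (hM y) hy

theorem setIntegral_closedBall_modularIntegrand_le (hA : IsStarShaped A)
    (hu : AEStronglyMeasurable u μ) (hs : s < 1) (hL : 0 ≤ L)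
    (hlip : ∀ y, ‖u x - u y‖ ≤ L * ‖x - y‖) :
    ∫ y in closedBall x 1, modularIntegrand A s u x y ∂μ ≤
      finrank ℝ E * μ.real (ball 0 1) * (A L / (1 - s)) := by
  have hs_sub : 0 < 1 - s := sub_pos.2 hs
  calc ∫ y in closedBall x 1, modularIntegrand A s u x y ∂μ
      ≤ ∫ y in closedBall x 1, A L * ‖x - y‖ ^ (1 - s - finrank ℝ E) ∂μ :=
        setIntegral_mono_on (integrableOn_closedBall_modularIntegrand hA hu hs hL hlip)
          ((integrableOn_closedBall_norm_sub_rpow μ x hs_sub zero_le_one).const_mul (A L))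
          measurableSet_closedBall
          fun y hy ↦ modularIntegrand_le_of_mem_closedBall hA hs.le hL (hlip y) hy
    _ = finrank ℝ E * μ.real (ball 0 1) * (A L / (1 - s)) := by
        rw [integral_const_mul, setIntegral_closedBall_norm_sub_rpow μ x hs_sub zero_le_one,
          Real.one_rpow]
        ring

theorem setIntegral_compl_closedBall_modularIntegrand_le (hA : IsStarShaped A)
    (hu : AEStronglyMeasurable u μ) (hs : 0 < s) (hM : ∀ y, ‖u x - u y‖ ≤ M) :
    ∫ y in (closedBall x 1)ᶜ, modularIntegrand A s u x y ∂μ ≤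
      finrank ℝ E * μ.real (ball 0 1) * (A M / s) := by
  calc ∫ y in (closedBall x 1)ᶜ, modularIntegrand A s u x y ∂μ
      ≤ ∫ y in (closedBall x 1)ᶜ, A M * ‖x - y‖ ^ (-s - finrank ℝ E) ∂μ :=
        setIntegral_mono_on (integrableOn_compl_closedBall_modularIntegrand hA hu hs hM)
          ((integrableOn_compl_closedBall_norm_sub_rpow μ x hs zero_lt_one).const_mul (A M))
          measurableSet_closedBall.compl
          fun y hy ↦ modularIntegrand_le_of_notMem_closedBall hA hs.le (hM y) hy
    _ = finrank ℝ E * μ.real (ball 0 1) * (A M / s) := by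
        rw [integral_const_mul, setIntegral_compl_closedBall_norm_sub_rpow μ x hs zero_lt_one,
          Real.one_rpow]
        ring

theorem integrable_modularIntegrand (hA : IsStarShaped A) (hu : AEStronglyMeasurable u μ)
    (hs : s ∈ Ioo 0 1) (hL : 0 ≤ L) (hlip : ∀ y, ‖u x - u y‖ ≤ L * ‖x - y‖)
    (hM : ∀ y, ‖u x - u y‖ ≤ M) : Integrable (modularIntegrand A s u x) μ :=
  integrableOn_univ.1 <| union_compl_self (closedBall x 1) ▸
    (integrableOn_closedBall_modularIntegrand hA hu hs.2 hL hlip).union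
      (integrableOn_compl_closedBall_modularIntegrand hA hu hs.1 hM)

theorem integral_modularIntegrand_le (hA : IsStarShaped A) (hu : AEStronglyMeasurable u μ)
    (hs : s ∈ Ioo 0 1) (hL : 0 ≤ L) (hlip : ∀ y, ‖u x - u y‖ ≤ L * ‖x - y‖)
    (hM : ∀ y, ‖u x - u y‖ ≤ M) :
    ∫ y, modularIntegrand A s u x y ∂μ ≤
      finrank ℝ E * μ.real (ball 0 1) * (A L / (1 - s) + A M / s) := by
  rw [← integral_add_compl measurableSet_closedBall
    (integrable_modularIntegrand hA hu hs hL hlip hM), mul_add]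
  exact add_le_add (setIntegral_closedBall_modularIntegrand_le hA hu hs.2 hL hlip)
    (setIntegral_compl_closedBall_modularIntegrand_le hA hu hs.1 hM)

end ModularIntegrand

theorem norm_sub_le_two_mul_iSup_norm {α F : Type*} [SeminormedAddCommGroup F] {u : α → F}
    (hu : BddAbove (range fun z ↦ ‖u z‖)) (x y : α) : ‖u x - u y‖ ≤ 2 * ⨆ z, ‖u z‖ :=
  calc ‖u x - u y‖ ≤ ‖u x‖ + ‖u y‖ := norm_sub_le _ _
    _ ≤ 2 * ⨆ z, ‖u z‖ := by linarith [le_ciSup hu x, le_ciSup hu y]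

theorem norm_sub_le_iSup_norm_fderiv_mul {E F : Type*} [NormedAddCommGroup E] [NormedSpace ℝ E]
    [NormedAddCommGroup F] [NormedSpace ℝ F] {u : E → F} (hu : Differentiable ℝ u)
    (hDu : BddAbove (range fun z ↦ ‖fderiv ℝ u z‖)) (x y : E) :
    ‖u x - u y‖ ≤ (⨆ z, ‖fderiv ℝ u z‖) * ‖x - y‖ :=
  convex_univ.norm_image_sub_le_of_norm_fderiv_le (fun z _ ↦ hu z) (fun z _ ↦ le_ciSup hDu z)
    (mem_univ y) (mem_univ x)

theorem norm_gradient {H : Type*} [NormedAddCommGroup H] [InnerProductSpace ℝ H]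
    [CompleteSpace H] (u : H → ℝ) (z : H) : ‖gradient u z‖ = ‖fderiv ℝ u z‖ :=
  LinearIsometryEquiv.norm_map _ _

theorem hasCompactSupport_of_tsupport_subset_ball {E F : Type*} [PseudoMetricSpace E]
    [ProperSpace E] [Zero F] {u : E → F} {x : E} {R : ℝ} (hu : tsupport u ⊆ ball x R) :
    HasCompactSupport u :=
  (isCompact_closedBall x R).of_isClosed_subset (isClosed_tsupport u)
    (hu.trans ball_subset_closedBall)

theorem statement12_general {E F : Type*} [NormedAddCommGroup E] [NormedSpace ℝ E]
    [FiniteDimensional ℝ E] [MeasurableSpace E] [BorelSpace E] (μ : Measure E)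
    [μ.IsAddHaarMeasure] [NormedAddCommGroup F] [NormedSpace ℝ F] {A : ℝ → ℝ}
    (hA : IsStarShaped A) {u : E → F} (hu : Differentiable ℝ u)
    (hu_bdd : BddAbove (range fun z ↦ ‖u z‖)) (hDu_bdd : BddAbove (range fun z ↦ ‖fderiv ℝ u z‖))
    {s : ℝ} (hs : s ∈ Ioo 0 1) (x : E) :
    Integrable (modularIntegrand A s u x) μ ∧
      (1 - s) * ∫ y, modularIntegrand A s u x y ∂μ ≤
        finrank ℝ E * μ.real (ball 0 1) * A (⨆ z, ‖fderiv ℝ u z‖) +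
          (1 - s) / s * (finrank ℝ E * μ.real (ball 0 1)) * A (2 * ⨆ z, ‖u z‖) := by
  have hs_sub : 0 < 1 - s := sub_pos.2 hs.2
  have hmeas : AEStronglyMeasurable u μ := hu.continuous.aestronglyMeasurable
  have hDu_nonneg : 0 ≤ ⨆ z, ‖fderiv ℝ u z‖ := Real.iSup_nonneg fun _ ↦ norm_nonneg _
  have hlip := norm_sub_le_iSup_norm_fderiv_mul hu hDu_bdd x
  have hosc := norm_sub_le_two_mul_iSup_norm hu_bdd x
  refine ⟨integrable_modularIntegrand hA hmeas hs hDu_nonneg hlip hosc, ?_⟩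
  calc (1 - s) * ∫ y, modularIntegrand A s u x y ∂μ
      ≤ (1 - s) * (finrank ℝ E * μ.real (ball 0 1) *
          (A (⨆ z, ‖fderiv ℝ u z‖) / (1 - s) + A (2 * ⨆ z, ‖u z‖) / s)) :=
        mul_le_mul_of_nonneg_left
          (integral_modularIntegrand_le hA hmeas hs hDu_nonneg hlip hosc) hs_sub.le
    _ = _ := by field_simp

/-- **estimate (3.6).** For an arbitrary Young function `A` and
`u ∈ C²_c(ℝⁿ)` with `supp u ⊂ B_R(0)`, `R > 1`: for `|x| < 2R` and `s ∈ (0,1)`,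
`F_s(x) ≤ n ω_n A(‖∇u‖_∞) + ((1−s)/s) n ω_n A(2‖u‖_∞)`. -/
theorem statement12 {n : ℕ} (A a : ℝ → ℝ) (hA : IsYoungPair A a)
    (u : Rn n → ℝ) (hu : ContDiff ℝ 2 u) (R : ℝ) (hR : 1 < R)
    (hsupp : tsupport u ⊆ Metric.ball 0 R)
    (s : ℝ) (hs : s ∈ Set.Ioo (0:ℝ) 1)
    (x : Rn n) (hx : ‖x‖ < 2 * R) :
    Fs A s u x ≤ nOmega n * A (⨆ z : Rn n, ‖gradient u z‖)
      + (1 - s) / s * nOmega n * A (2 * ⨆ z : Rn n, |u z|) := by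
  have hcs := hasCompactSupport_of_tsupport_subset_ball hsupp
  simpa only [Fs, nOmega, modularIntegrand, norm_gradient, finrank_euclideanSpace_fin,
    Real.norm_eq_abs, measureReal_def, mul_assoc] using
    (statement12_general volume hA.isStarShaped (hu.differentiable two_ne_zero)
      (hu.continuous.norm.bddAbove_range_of_hasCompactSupport hcs.norm)
      ((hu.continuous_fderiv two_ne_zero).norm.bddAbove_range_of_hasCompactSupport
        (hcs.fderiv ℝ).norm) hs x).2
end
end
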